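/- arXiv:1203.3645 — 4 statements merged into one kernel-verified Lean document; each statement's English description precedes it below -/
import Mathlib

section
/- Let G be a finitely generated abelian group of rank k, and let H be a group of automorphisms of G each of which is a nil-automorphism. Then there exists m such that [G,ₘ H] = 1, i.e., H stabilizes a finite series in G. -/
/-!
Write `G` additively as a finitely generated `ℤ`-module `M` with `d` generators, and let `H` act
by endomorphisms `ρ h`, each `ρ h - 1` being nilpotent because `M` is finitely generated.

For a prime `p`, every `ρ h` induces on an elementary abelian `p`-quotient of `M` an automorphism
of `p`-power order, since `(ρ h) ^ p ^ n - 1 = (ρ h - 1) ^ p ^ n` there. Counting fixed points of a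
`p`-group acting on a finite `p`-group (`exists_fixed`) shows that the ascending series
`F₀ = p M`, `F_{i+1} = {x | ∀ h, ρ h x - x ∈ F_i}` grows strictly until it reaches `M`. As `p M` has
index dividing `p ^ d`, already `F_d = M`, and hence `[M,_d H] ≤ p M`. The point is that `d` does
not depend on `p` (`iterate_commSub_le_prime`).

Taking commutators commutes with multiplication by integers, so `[M,_{d n} H] ≤ N M` whenever `N`
is a product of `n` primes. If `e ≠ 0` kills the torsion of `M` and has `n` prime factors, then
`[M,_{d (n + 1)} H] ≤ q (e M)` for every prime `q` at once. Since `e M` is free of finite rank,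
`⋂_q q (e M) = 0` (`eq_zero_of_forall_prime`).
-/

/-- The subgroup `[K, H]` generated by commutators `g⁻¹ * h g` with `g ∈ K`, `h ∈ H`,
for a group `H` of automorphisms of `G`. -/
def autCommutator {G : Type*} [Group G] (H : Subgroup (MulAut G)) (K : Subgroup G) :
    Subgroup G :=
  Subgroup.closure {x : G | ∃ g ∈ K, ∃ h ∈ H, x = g⁻¹ * h g}

/-! ### Fixed points of nil actions on elementary abelian groups -/

section FixedPoints

variable {V H : Type*} [AddCommGroup V] [Group H]

/-- A nil action on a nonzero finite group of exponent `p` has a nonzero fixed point: the group of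
automorphisms through which it acts is a `p`-group. -/
lemma exists_fixed {p : ℕ} [Fact p.Prime] [Finite V] (σ : H →* Module.End ℤ V)
    (hp : ∀ v : V, (p : ℤ) • v = 0) (hcard : p ∣ Nat.card V)
    (hnil : ∀ h, IsNilpotent (σ h - 1)) : ∃ v : V, v ≠ 0 ∧ ∀ h, σ h v = v := by
  have : Nontrivial V := by
    rw [← Finite.one_lt_card_iff_nontrivial]
    exact (Fact.out : p.Prime).one_lt.trans_le (Nat.le_of_dvd Nat.card_pos hcard)
  have : CharP (Module.End ℤ V) p := by
    rw [CharP.charP_iff_prime_eq_zero Fact.out]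
    ext v
    simpa using hp v
  have hpg : IsPGroup p σ.toHomUnits.range := by
    rintro ⟨_, h, rfl⟩
    obtain ⟨n, hn⟩ := hnil h
    refine ⟨n, Subtype.ext (Units.ext ?_)⟩
    have h1 : (σ h - 1) ^ p ^ n = 0 :=
      pow_eq_zero_of_le (Nat.lt_pow_self (Fact.out : p.Prime).one_lt).le hn
    rw [sub_pow_char_pow_of_commute p n (Commute.one_right _), one_pow, sub_eq_zero] at h1
    simpa using h1
  obtain ⟨b, hb, hb0⟩ := hpg.exists_fixed_point_of_prime_dvd_card_of_fixed_point V hcard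
    (a := 0) (fun g => smul_zero g)
  exact ⟨b, hb0.symm, fun h => hb ⟨_, h, rfl⟩⟩

end FixedPoints

/-! ### Commutator series and fixed-point series -/

section Series

variable {M H : Type*} [AddCommGroup M] [Group H]

/-- The commutator `[K, H]`, in additive notation: the submodule generated by all `ρ h x - x` with
`x ∈ K`. -/
def commSub (ρ : H →* Module.End ℤ M) (K : Submodule ℤ M) : Submodule ℤ M :=
  ⨆ h, K.map (ρ h - 1)

/-- The elements of `M` whose image in `M ⧸ F` is fixed by `H`. -/
def fixedMod (ρ : H →* Module.End ℤ M) (F : Submodule ℤ M) : Submodule ℤ M :=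
  ⨅ h, F.comap (ρ h - 1)

lemma commSub_mono (ρ : H →* Module.End ℤ M) : Monotone (commSub ρ) :=
  fun _ _ h => iSup_mono fun _ => Submodule.map_mono h

lemma fixedMod_mono (ρ : H →* Module.End ℤ M) : Monotone (fixedMod ρ) :=
  fun _ _ h => iInf_mono fun _ => Submodule.comap_mono h

/-- The Galois connection that converts the ascending series into a bound for the descending one. -/
lemma commSub_le_iff (ρ : H →* Module.End ℤ M) {K F : Submodule ℤ M} :
    commSub ρ K ≤ F ↔ K ≤ fixedMod ρ F := by
  simp [commSub, fixedMod, Submodule.map_le_iff_le_comap]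

lemma mem_fixedMod (ρ : H →* Module.End ℤ M) {F : Submodule ℤ M} {x : M} :
    x ∈ fixedMod ρ F ↔ ∀ h, ρ h x - x ∈ F := by
  simp [fixedMod]

lemma commSub_map_smul (ρ : H →* Module.End ℤ M) (N : ℤ) (K : Submodule ℤ M) :
    commSub ρ (K.map (LinearMap.lsmul ℤ M N)) = (commSub ρ K).map (LinearMap.lsmul ℤ M N) := by
  simp only [commSub, Submodule.map_iSup, ← Submodule.map_comp]
  congr! 3 with h
  ext x
  simp

lemma iterate_commSub_map_smul (ρ : H →* Module.End ℤ M) (N : ℤ) (n : ℕ) (K : Submodule ℤ M) :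
    (commSub ρ)^[n] (K.map (LinearMap.lsmul ℤ M N)) =
      ((commSub ρ)^[n] K).map (LinearMap.lsmul ℤ M N) :=
  ((show Function.Semiconj (Submodule.map (LinearMap.lsmul ℤ M N)) (commSub ρ) (commSub ρ) from
    fun K => (commSub_map_smul ρ N K).symm).iterate_right n K).symm

/-- The index bound responsible for uniformity in `p`: a surjection `ℤ ^ d → M` induces a
surjection `(ℤ / p) ^ d → M / p M`. -/
lemma index_dvd {d : ℕ} (f : (Fin d → ℤ) →ₗ[ℤ] M) (hf : Function.Surjective f) (p : ℕ) :
    ((⊤ : Submodule ℤ M).map (LinearMap.lsmul ℤ M (p : ℤ))).toAddSubgroup.index ∣ p ^ d := by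
  set F := ((⊤ : Submodule ℤ M).map (LinearMap.lsmul ℤ M (p : ℤ))).toAddSubgroup
  let r : (Fin d → ℤ) →+ (Fin d → ZMod p) := (Int.castAddHom (ZMod p)).compLeft (Fin d)
  have hr : r.ker ≤ F.comap f.toAddMonoidHom := by
    intro x hx
    have hx' : ∀ i, (p : ℤ) ∣ x i := fun i =>
      (ZMod.intCast_zmod_eq_zero_iff_dvd _ _).1 (congrFun hx i)
    choose y hy using hx'
    refine ⟨f y, trivial, ?_⟩
    have hxy : x = (p : ℤ) • y := funext hy
    rw [hxy]
    exact (map_smul f (p : ℤ) y).symm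
  have hsurj : Function.Surjective r := fun y =>
    ⟨fun i => (ZMod.intCast_surjective (y i)).choose,
      funext fun i => (ZMod.intCast_surjective (y i)).choose_spec⟩
  have h1 := AddSubgroup.index_dvd_of_le hr
  rw [AddSubgroup.index_comap_of_surjective F (f := f.toAddMonoidHom) hf,
    AddSubgroup.index_ker, AddMonoidHom.range_eq_top.2 hsurj] at h1
  simpa [Nat.card_pi, Nat.card_zmod, Nat.card_congr AddSubgroup.topEquiv.toEquiv] using h1

/-- Strict growth of the ascending series: `exists_fixed` applied to the action on `M ⧸ F`. -/
lemma exists_mem_fixedMod {p : ℕ} [Fact p.Prime] (ρ : H →* Module.End ℤ M)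
    (hnil : ∀ h, IsNilpotent (ρ h - 1)) (F : Submodule ℤ M)
    (hinv : ∀ h, F ≤ F.comap (ρ h)) (hp : ∀ x : M, (p : ℤ) • x ∈ F)
    (hcard : p ∣ F.toAddSubgroup.index) (h0 : F.toAddSubgroup.index ≠ 0) :
    ∃ x ∉ F, x ∈ fixedMod ρ F := by
  let σ : H →* Module.End ℤ (M ⧸ F) :=
    { toFun := fun h => F.mapQ F (ρ h) (hinv h)
      map_one' := by ext x; simp
      map_mul' := fun a b => by ext x; simp }
  have hσ : ∀ h, IsNilpotent (σ h - 1) := by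
    intro h
    obtain ⟨n, hn⟩ := hnil h
    have key : ∀ (k : ℕ) (x : M), ((σ h - 1) ^ k) (F.mkQ x) = F.mkQ (((ρ h - 1) ^ k) x) := by
      intro k
      induction k with
      | zero => intro x; simp
      | succ k ih =>
        intro x
        rw [pow_succ, pow_succ, Module.End.mul_apply, Module.End.mul_apply, ← ih]
        simp [σ]
    refine ⟨n, LinearMap.ext fun y => ?_⟩
    obtain ⟨x, rfl⟩ := F.mkQ_surjective y
    rw [key, hn]
    simp
  have hc : Nat.card (M ⧸ F) = F.toAddSubgroup.index := rfl
  have : Finite (M ⧸ F) := Nat.finite_of_card_ne_zero (hc ▸ h0)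
  obtain ⟨v, hv, hfix⟩ := exists_fixed (p := p) σ (fun v => by
    obtain ⟨x, rfl⟩ := F.mkQ_surjective v
    rw [← map_smul]
    exact (Submodule.Quotient.mk_eq_zero F).2 (hp x)) (hc ▸ hcard) hσ
  obtain ⟨x, rfl⟩ := F.mkQ_surjective v
  refine ⟨x, by simpa using hv, (mem_fixedMod ρ).2 fun h => ?_⟩
  rw [← Submodule.Quotient.eq]
  exact hfix h

/-- With `d` generators, `[M,_d H] ≤ p M` for every prime `p`. -/
lemma iterate_commSub_le_prime {d : ℕ} (f : (Fin d → ℤ) →ₗ[ℤ] M) (hf : Function.Surjective f)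
    (ρ : H →* Module.End ℤ M) (hnil : ∀ h, IsNilpotent (ρ h - 1)) {p : ℕ} (hp : p.Prime) :
    (commSub ρ)^[d] ⊤ ≤ (⊤ : Submodule ℤ M).map (LinearMap.lsmul ℤ M (p : ℤ)) := by
  have : Fact p.Prime := ⟨hp⟩
  set F₀ := (⊤ : Submodule ℤ M).map (LinearMap.lsmul ℤ M (p : ℤ)) with hF₀
  let F : ℕ → Submodule ℤ M := fun i => (fixedMod ρ)^[i] F₀
  have hsucc : ∀ i, F (i + 1) = fixedMod ρ (F i) := fun i => Function.iterate_succ_apply' ..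
  have hasc : ∀ i, F i ≤ F (i + 1) := by
    intro i
    induction i with
    | zero =>
      rw [hsucc]
      rintro _ ⟨y, -, rfl⟩
      refine (mem_fixedMod ρ).2 fun h => ⟨ρ h y - y, trivial, ?_⟩
      simp [smul_sub]
    | succ i ih =>
      rw [hsucc, hsucc (i + 1)]
      exact fixedMod_mono ρ ih
  have hinv : ∀ i h, F i ≤ (F i).comap (ρ h) := by
    intro i h x hx
    have h1 := (mem_fixedMod ρ).1 (hsucc i ▸ hasc i hx) h
    simpa using add_mem h1 hx
  have hpF : ∀ i (x : M), (p : ℤ) • x ∈ F i := fun i x =>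
    monotone_nat_of_le_succ hasc (Nat.zero_le i) ⟨x, trivial, rfl⟩
  have hindex : ∀ i ≤ d, (F i).toAddSubgroup.index ∣ p ^ (d - i) := by
    intro i
    induction i with
    | zero => intro _; exact index_dvd f hf p
    | succ i ih =>
      intro hi
      obtain ⟨a, ha, hia⟩ := (Nat.dvd_prime_pow hp).1 (ih (by omega))
      have hle : (F i).toAddSubgroup ≤ (F (i + 1)).toAddSubgroup := hasc i
      obtain ⟨b, hb, hib⟩ := (Nat.dvd_prime_pow hp).1 (hia ▸ AddSubgroup.index_dvd_of_le hle)
      rw [hib]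
      refine pow_dvd_pow p ?_
      rcases Nat.eq_zero_or_pos a with rfl | hapos
      · omega
      · obtain ⟨x, hx, hx'⟩ := exists_mem_fixedMod (p := p) ρ hnil (F i) (hinv i) (hpF i)
          (hia ▸ dvd_pow_self p hapos.ne') (hia ▸ pow_ne_zero a hp.ne_zero)
        -- Equal indices would force `F i = F (i + 1)`.
        have hne : b ≠ a := by
          rintro rfl
          have h1 := AddSubgroup.relIndex_mul_index hle
          rw [hia, hib] at h1
          have h2 := Nat.eq_of_mul_eq_mul_right (pow_pos hp.pos b) (h1.trans (one_mul _).symm)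
          exact hx (AddSubgroup.relIndex_eq_one.1 h2 ((hsucc i).symm ▸ hx'))
        omega
  have htop : F d = ⊤ := by
    have h1 := hindex d le_rfl
    rw [Nat.sub_self, pow_zero, Nat.dvd_one, AddSubgroup.index_eq_one] at h1
    exact Submodule.toAddSubgroup_injective h1
  have hdesc : ∀ j ≤ d, (commSub ρ)^[j] ⊤ ≤ F (d - j) := by
    intro j
    induction j with
    | zero => intro _; exact htop.ge
    | succ j ih =>
      intro hj
      rw [Function.iterate_succ_apply', commSub_le_iff, ← hsucc,
        show d - (j + 1) + 1 = d - j by omega]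
      exact ih (by omega)
  simpa [F] using hdesc d le_rfl

lemma iterate_commSub_le_mul {d n : ℕ} (f : (Fin d → ℤ) →ₗ[ℤ] M) (hf : Function.Surjective f)
    (ρ : H →* Module.End ℤ M) (hnil : ∀ h, IsNilpotent (ρ h - 1)) {p : ℕ} (hp : p.Prime) (N : ℤ)
    (hN : (commSub ρ)^[n] ⊤ ≤ (⊤ : Submodule ℤ M).map (LinearMap.lsmul ℤ M N)) :
    (commSub ρ)^[d + n] ⊤ ≤ (⊤ : Submodule ℤ M).map (LinearMap.lsmul ℤ M (p * N)) := by
  rw [Function.iterate_add_apply]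
  refine ((commSub_mono ρ).iterate d hN).trans ?_
  rw [iterate_commSub_map_smul]
  refine (Submodule.map_mono (iterate_commSub_le_prime f hf ρ hnil hp)).trans ?_
  rintro _ ⟨_, ⟨x, -, rfl⟩, rfl⟩
  exact ⟨x, trivial, by simp [mul_smul]⟩

lemma exists_iterate_commSub_le {d : ℕ} (f : (Fin d → ℤ) →ₗ[ℤ] M) (hf : Function.Surjective f)
    (ρ : H →* Module.End ℤ M) (hnil : ∀ h, IsNilpotent (ρ h - 1)) (e : ℕ) (he : e ≠ 0) :
    ∃ n, (commSub ρ)^[n] ⊤ ≤ (⊤ : Submodule ℤ M).map (LinearMap.lsmul ℤ M (e : ℤ)) := by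
  induction e using induction_on_primes with
  | zero => exact absurd rfl he
  | one => exact ⟨0, fun x _ => ⟨x, trivial, by simp⟩⟩
  | prime_mul p a hp ih =>
    obtain ⟨n, hn⟩ := ih (right_ne_zero_of_mul he)
    exact ⟨d + n, by simpa using iterate_commSub_le_mul f hf ρ hnil hp a hn⟩

/-! ### Intersection over all primes -/

variable (M) in
lemma exists_torsion_annihilator [Module.Finite ℤ M] :
    ∃ e : ℕ, e ≠ 0 ∧ ∀ x ∈ Submodule.torsion ℤ M, e • x = 0 := by
  have : Finite (Submodule.torsion ℤ M) :=
    Module.finite_of_fg_torsion _ Submodule.torsion_isTorsion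
  refine ⟨AddMonoid.exponent (Submodule.torsion ℤ M), AddMonoid.exponent_ne_zero_of_finite,
    fun x hx => ?_⟩
  exact congrArg Subtype.val (AddMonoid.exponent_nsmul_eq_zero (⟨x, hx⟩ : Submodule.torsion ℤ M))

/-- If `e` kills the torsion of `M`, then `e M` is free of finite rank, so none of its nonzero
elements is divisible in it by all primes. -/
lemma eq_zero_of_forall_prime [Module.Finite ℤ M] {e : ℕ}
    (he : ∀ x ∈ Submodule.torsion ℤ M, e • x = 0) {x : M}
    (hx : ∀ q : ℕ, q.Prime → ∃ y : M, ((q : ℤ) * e) • y = x) : x = 0 := by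
  let L : Submodule ℤ M := (LinearMap.lsmul ℤ M (e : ℤ)).range
  have : Module.IsTorsionFree ℤ L := by
    refine Module.IsTorsionFree.of_smul_eq_zero fun c m hcm => ?_
    rw [or_iff_not_imp_left]
    intro hc
    obtain ⟨_, y, rfl⟩ := m
    have h1 : (c * e) • y = 0 := by
      simpa [mul_smul] using congrArg Subtype.val hcm
    -- If `c • m = 0` with `m = e y`, then `y` is torsion, hence killed by `e`.
    refine Subtype.ext ?_
    by_cases h0 : e = 0
    · simp [h0]
    · have h2 : y ∈ Submodule.torsion ℤ M := (Submodule.mem_torsion_iff y).2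
        ⟨⟨c * e, mem_nonZeroDivisors_of_ne_zero (by simp [hc, h0])⟩, h1⟩
      simpa using he y h2
  have : Module.Free ℤ L := Module.free_of_finite_type_torsion_free'
  let B := Module.Free.chooseBasis ℤ L
  have hxL : x ∈ L := by
    obtain ⟨y, hy⟩ := hx 2 Nat.prime_two
    exact ⟨(2 : ℤ) • y, by rw [← hy]; simp [mul_smul]⟩
  have hrepr : B.repr ⟨x, hxL⟩ = 0 := by
    ext i
    set c := B.repr ⟨x, hxL⟩ i with hc
    -- A prime exceeding `|c|` divides the coordinate `c` of `x`, so `c = 0`.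
    obtain ⟨q, hq, hqp⟩ := Nat.exists_infinite_primes (c.natAbs + 1)
    obtain ⟨y, hy⟩ := hx q hqp
    have h1 : (⟨x, hxL⟩ : L) = (q : ℤ) • ⟨(e : ℤ) • y, ⟨y, rfl⟩⟩ :=
      Subtype.ext (hy.symm.trans (mul_smul _ _ _))
    refine Int.eq_zero_of_abs_lt_dvd (m := q) ?_ (by rw [Int.abs_eq_natAbs]; omega)
    rw [hc, h1, map_smul]
    exact dvd_mul_right _ _
  exact congrArg Subtype.val (B.repr.map_eq_zero_iff.1 hrepr)

lemma exists_iterate_commSub_eq_bot [Module.Finite ℤ M] (ρ : H →* Module.End ℤ M)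
    (hnil : ∀ h, IsNilpotent (ρ h - 1)) : ∃ m, (commSub ρ)^[m] ⊤ = ⊥ := by
  obtain ⟨d, f, hf⟩ := Module.Finite.exists_fin' ℤ M
  obtain ⟨e, he0, he⟩ := exists_torsion_annihilator M
  obtain ⟨n, hn⟩ := exists_iterate_commSub_le f hf ρ hnil e he0
  refine ⟨d + n, (Submodule.eq_bot_iff _).2 fun x hx => eq_zero_of_forall_prime he fun q hq => ?_⟩
  obtain ⟨y, -, hy⟩ := iterate_commSub_le_mul f hf ρ hnil hq e hn hx
  exact ⟨y, hy⟩

end Series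

/-! ### Passage from automorphisms to linear maps -/

/-- The action of a group `H` of automorphisms of `G` on `Additive G`. -/
def autRep {G : Type*} [CommGroup G] (H : Subgroup (MulAut G)) :
    H →* Module.End ℤ (Additive G) where
  toFun h := (MulEquiv.toAdditive (h : MulAut G)).toAddMonoidHom.toIntLinearMap
  map_one' := rfl
  map_mul' _ _ := rfl

lemma autRep_sub_one_apply {G : Type*} [CommGroup G] (H : Subgroup (MulAut G)) (h : H) (g : G) :
    (autRep H h - 1) (Additive.ofMul g) = Additive.ofMul (g⁻¹ * (h : MulAut G) g) := by
  rw [mul_comm, ← div_eq_mul_inv]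
  rfl

lemma ofMul_mem_iterate_commSub {G : Type*} [CommGroup G] (H : Subgroup (MulAut G)) (m : ℕ) :
    ∀ x ∈ (fun K => autCommutator H K)^[m] (⊤ : Subgroup G),
      Additive.ofMul x ∈ (commSub (autRep H))^[m] ⊤ := by
  induction m with
  | zero => intro x _; trivial
  | succ m ih =>
    intro x hx
    rw [Function.iterate_succ_apply'] at hx ⊢
    induction hx using Subgroup.closure_induction with
    | mem x hx =>
      obtain ⟨g, hg, h, hh, rfl⟩ := hx
      rw [← autRep_sub_one_apply H ⟨h, hh⟩]
      exact Submodule.mem_iSup_of_mem _ (Submodule.mem_map_of_mem (ih g hg))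
    | one => exact zero_mem _
    | mul x y _ _ hx hy => exact add_mem hx hy
    | inv x _ hx => exact neg_mem hx

/-- If `G` is a finitely generated abelian group and `H` is a group of nil-automorphisms
of `G`, then there is `m` with `[G,ₘ H] = 1`: `H` stabilizes a finite series in `G`. -/
theorem stmt_1 {G : Type*} [CommGroup G] [Group.FG G]
    (H : Subgroup (MulAut G))
    (hnil : ∀ h ∈ H, ∀ g : G, ∃ n : ℕ, (fun a => a⁻¹ * h a)^[n] g = 1) :
    ∃ m : ℕ, (fun K => autCommutator H K)^[m] (⊤ : Subgroup G) = ⊥ := by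
  have hnil' : ∀ h, IsNilpotent (autRep H h - 1) := by
    intro h
    rw [Module.End.isNilpotent_iff_of_finite]
    intro g
    obtain ⟨n, hn⟩ := hnil h h.2 g.toMul
    refine ⟨n, ?_⟩
    have hsemi : Function.Semiconj Additive.ofMul (fun a => a⁻¹ * (h : MulAut G) a)
        (⇑(autRep H h - 1 : Module.End ℤ (Additive G))) := fun a => (autRep_sub_one_apply H h a).symm
    rw [Module.End.pow_apply]
    have h1 := hsemi.iterate_right n g.toMul
    rw [hn] at h1
    exact h1.symm
  obtain ⟨m, hm⟩ := exists_iterate_commSub_eq_bot (autRep H) hnil'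
  refine ⟨m, (Subgroup.eq_bot_iff_forall _).2 fun x hx => ?_⟩
  have h1 := ofMul_mem_iterate_commSub H m x hx
  rw [hm] at h1
  exact h1
end

section
/- If G is a group satisfying the maximal condition on subgroups (every subgroup is finitely generated) and H is a group of nil-automorphisms of G, then [G, H] is contained in the Fitting subgroup of G. -/
/-!
Let `h` be a nil-automorphism of `G` and let `t` be the generator of `ℤ` in the semidirect product
`Γ = G ⋊ ℤ`, acting on `G` as `h`. For `x ∈ Γ` the commutator `[x, t]` lies in `G`, where iterated
commutation with `t` is the map `a ↦ a⁻¹ h(a)`; hence `t` is a left Engel element of `Γ`. Since `Γ`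
satisfies Max (`wf_semi`), Baer's theorem (`baer`) shows that the normal closure `T` of `t` is
nilpotent. So `T ∩ G` is a nilpotent normal subgroup of `G`, and it contains
`g⁻¹ h(g) = (g⁻¹ t g) t⁻¹`. Working with one `h` at a time keeps the acting group cyclic, so that
no finiteness of `H` is needed.

Baer's theorem is proved here for a conjugation-invariant set `D` of left Engel elements, by
studying the maximal nilpotent subgroups generated by elements of `D`. Such a subgroup `V` contains
every `d ∈ D` that normalises it, as `V⟨d⟩` is again nilpotent (`nilpotent_closure_insert`). Two
distinct ones with largest intersection would contradict the Engel condition (`maximal_unique`), so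
there is only one; it is normal and equals `⟨D⟩`.
-/

/-- The Fitting subgroup of a group: the join of all nilpotent normal subgroups. -/
def fittingSubgroup (G : Type*) [Group G] : Subgroup G :=
  ⨆ (N : Subgroup G) (_ : N.Normal) (_ : Group.IsNilpotent N), N

namespace BaerFitting

open Subgroup
open scoped commutatorElement

/-- The commutator `[a, d] = a⁻¹ · (d a d⁻¹)` of `a` with conjugation by `d`. Iterating it in `a`
gives the left-normed commutators `[a, d, …, d]`. -/
def eng {M : Type*} [Group M] (d a : M) : M := a⁻¹ * (d * a * d⁻¹)

/-! ### The maximal condition -/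

theorem wf_of_fg {G : Type*} [Group G] (h : ∀ K : Subgroup G, K.FG) :
    WellFoundedGT (Subgroup G) := by
  rw [wellFoundedGT_iff_monotone_chain_condition]
  intro f
  obtain ⟨S, hS⟩ := h (⨆ n, f n)
  have hdir : Directed (· ≤ ·) f := f.monotone.directed_le
  have hmem : ∀ s ∈ S, ∃ n, s ∈ f n := fun s hs =>
    (mem_iSup_of_directed hdir).1 (hS ▸ subset_closure hs)
  choose! g hg using hmem
  have hle : ∀ k, f k ≤ f (S.sup g) := fun k =>
    (le_iSup f k).trans <| hS ▸ (closure_le _).2 fun s hs =>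
      f.monotone (Finset.le_sup (f := g) hs) (hg s hs)
  exact ⟨S.sup g, fun m hm => le_antisymm (f.monotone hm) (hle m)⟩

instance wf_int : WellFoundedGT (Subgroup (Multiplicative ℤ)) :=
  wf_of_fg fun K => by
    obtain ⟨k, hk⟩ := (isCyclic_iff_exists_zpowers_eq_top (α := K)).1 inferInstance
    refine (Group.fg_iff_subgroup_fg K).1 (Group.fg_iff.2 ⟨{k}, ?_, Set.finite_singleton k⟩)
    rw [← zpowers_eq_closure, hk]

instance wf_sub {G : Type*} [Group G] [WellFoundedGT (Subgroup G)] (M : Subgroup G) :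
    WellFoundedGT (Subgroup M) :=
  StrictMono.wellFoundedGT (f := fun K : Subgroup M => K.map M.subtype)
    (Monotone.strictMono_of_injective (fun _ _ h => map_mono h) (map_injective M.subtype_injective))

/-- Max passes to extensions: a subgroup of `N ⋊ A` is determined, within a chain, by its
intersection with `N` and its image in `A`. -/
theorem wf_semi {N A : Type*} [Group N] [Group A] (φ : A →* MulAut N)
    [WellFoundedGT (Subgroup N)] [WellFoundedGT (Subgroup A)] :
    WellFoundedGT (Subgroup (N ⋊[φ] A)) := by
  refine StrictMono.wellFoundedGT (β := Subgroup N × Subgroup A)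
    (f := fun K => (K.comap SemidirectProduct.inl, K.map SemidirectProduct.rightHom)) ?_
  intro K L hKL
  refine lt_of_le_not_ge ⟨comap_mono hKL.le, map_mono hKL.le⟩ ?_
  rintro ⟨h1, h2⟩
  refine hKL.not_ge fun x hx => ?_
  obtain ⟨y, hy, hxy⟩ := h2 (mem_map_of_mem _ hx)
  have hr : SemidirectProduct.rightHom (x * y⁻¹) = 1 := by rw [map_mul, map_inv, hxy]; simp
  have : x * y⁻¹ ∈ (SemidirectProduct.inl : N →* N ⋊[φ] A).range := by
    rw [SemidirectProduct.range_inl_eq_ker_rightHom]; exact hr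
  obtain ⟨n, hn⟩ := this
  have hnL : n ∈ L.comap (SemidirectProduct.inl : N →* N ⋊[φ] A) := by
    rw [mem_comap, hn]; exact L.mul_mem hx (L.inv_mem (hKL.le hy))
  have := K.mul_mem (mem_comap.1 (h1 hnL)) hy
  rwa [hn, inv_mul_cancel_right] at this

/-! ### Adjoining an Engel element to a nilpotent subgroup -/

/-- A nilpotent normal subgroup `V` and an element `d` acting on it by nil commutators generate a
nilpotent group. The upper central series stabilises at some `S` by Max, and descending induction
along the lower central series of `V` puts every term of it inside `S`. -/
theorem nilpotent_of_top {M : Type*} [Group M] [WellFoundedGT (Subgroup M)] (V : Subgroup M)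
    [V.Normal] (hV : Group.IsNilpotent V) (d : M) (htop : closure (insert d (V : Set M)) = ⊤)
    (hd : ∀ v ∈ V, ∃ n : ℕ, (eng d)^[n] v = 1) : Group.IsNilpotent M := by
  obtain ⟨N, hN⟩ := WellFoundedGT.monotone_chain_condition
    (⟨Subgroup.upperCentralSeries M, Subgroup.upperCentralSeries_mono M⟩ : ℕ →o Subgroup M)
  have hN1 : Subgroup.upperCentralSeries M N = Subgroup.upperCentralSeries M (N + 1) := hN (N + 1) (by omega)
  set S := Subgroup.upperCentralSeries M N with hSdef
  have hcomm : ∀ x y : M, ⁅x, y⁆ ∈ S ↔ (y : M ⧸ S) ∈ centralizer {(x : M ⧸ S)} := by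
    intro x y
    rw [← QuotientGroup.eq_one_iff, mem_centralizer_singleton_iff, commutatorElement_def]
    simp only [QuotientGroup.mk_mul, QuotientGroup.mk_inv]
    rw [mul_inv_eq_one, mul_inv_eq_iff_eq_mul]
    exact eq_comm
  have hS : ∀ x : M, ⁅x, d⁆ ∈ S → (∀ v ∈ V, ⁅x, v⁆ ∈ S) → x ∈ S := by
    intro x hxd hxV
    have hle : closure (insert d (V : Set M)) ≤
        (centralizer {(x : M ⧸ S)}).comap (QuotientGroup.mk' S) := by
      rw [closure_le]
      rintro y (rfl | hy)
      · exact (hcomm _ _).1 hxd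
      · exact (hcomm _ _).1 (hxV y hy)
    rw [htop] at hle
    rw [hN1, Subgroup.mem_upperCentralSeries_succ_iff]
    exact fun y => (hcomm _ _).2 (hle (mem_top y))
  have heng : ∀ x : M, eng d x ∈ S → ⁅x, d⁆ ∈ S := by
    intro x hx
    have := (inferInstance : S.Normal).conj_mem _ hx x
    rw [← inv_mem_iff]
    convert this using 1
    simp [eng, commutatorElement_def, mul_assoc]
  have hnorm : ∀ i, (V.lowerCentralSeries i).Normal := fun i => inferInstance
  have key : ∀ i, V.lowerCentralSeries (i + 1) ≤ S → V.lowerCentralSeries i ≤ S := by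
    intro i hi z hz
    obtain ⟨n, hn⟩ := hd z (lowerCentralSeries_le_self V i hz)
    induction n generalizing z with
    | zero => exact (show z = 1 from hn) ▸ S.one_mem
    | succ n ih =>
      refine hS z (heng z (ih ?_ hn)) fun v hv => hi ?_
      · exact mul_mem (inv_mem hz) ((hnorm i).conj_mem z hz d)
      · exact commutator_mem_commutator hz hv
  obtain ⟨c, hc⟩ := (isNilpotent_iff_lowerCentralSeries V).1 hV
  have hall : ∀ j i, i + j = c → V.lowerCentralSeries i ≤ S := by
    intro j
    induction j with
    | zero => rintro i rfl; rw [show i = i + 0 from rfl, hc]; exact bot_le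
    | succ j ih => exact fun i hij => key i (ih (i + 1) (by omega))
  have hVS : V ≤ S := hall c 0 (by omega)
  have hdS : d ∈ S := by
    refine hS d (by simp) fun v hv => hVS ?_
    rw [commutatorElement_def]
    exact mul_mem ((inferInstance : V.Normal).conj_mem v hv d) (inv_mem hv)
  refine ⟨N, ?_⟩
  rw [← hSdef, eq_top_iff, ← htop, closure_le]
  rintro y (rfl | hy)
  exacts [hdS, hVS hy]

theorem nilpotent_closure_insert {Γ : Type*} [Group Γ] [WellFoundedGT (Subgroup Γ)]
    (V : Subgroup Γ) (hV : Group.IsNilpotent V) (d : Γ) (hdV : d ∈ normalizer (V : Set Γ))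
    (hd : ∀ v : Γ, ∃ n : ℕ, (eng d)^[n] v = 1) :
    Group.IsNilpotent (closure (insert d (V : Set Γ))) := by
  set M := closure (insert d (V : Set Γ)) with hM
  have hVM : V ≤ M := fun v hv => subset_closure (Or.inr hv)
  have hdM : d ∈ M := subset_closure (Or.inl rfl)
  have hMn : M ≤ normalizer (V : Set Γ) := by
    rw [hM, closure_le]
    rintro y (rfl | hy)
    exacts [hdV, le_normalizer hy]
  have : (V.subgroupOf M).Normal := (normal_subgroupOf_iff_le_normalizer hVM).2 hMn
  refine nilpotent_of_top (V.subgroupOf M)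
    ((Group.isNilpotent_congr (subgroupOfEquivOfLe hVM)).2 hV) ⟨d, hdM⟩ ?_ ?_
  · refine map_injective M.subtype_injective ?_
    rw [MonoidHom.map_closure, Set.image_insert_eq, ← coe_map, map_subgroupOf_eq_of_le hVM,
      ← MonoidHom.range_eq_map, range_subtype]
    exact hM.symm
  · intro v _
    obtain ⟨n, hn⟩ := hd v
    refine ⟨n, Subtype.ext ?_⟩
    have hsc : Function.Semiconj (Subtype.val : M → Γ) (eng ⟨d, hdM⟩) (eng d) := fun _ => rfl
    rw [(hsc.iterate_right n).eq, hn]; rfl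

/-! ### Baer's theorem -/

/-- `K` is nilpotent and generated by the elements of `D` it contains. -/
def NilGen {Γ : Type*} [Group Γ] (D : Set Γ) (K : Subgroup Γ) : Prop :=
  Group.IsNilpotent K ∧ K ≤ closure (D ∩ K)

theorem NilGen.map {Γ : Type*} [Group Γ] {D : Set Γ} (hD : ∀ g : Γ, ∀ d ∈ D, g * d * g⁻¹ ∈ D)
    {K : Subgroup Γ} (hK : NilGen D K) (g : Γ) :
    NilGen D (K.map (MulAut.conj g).toMonoidHom) := by
  refine ⟨(Group.isNilpotent_congr (K.equivMapOfInjective _ (MulAut.conj g).injective)).1 hK.1, ?_⟩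
  refine (map_mono hK.2).trans ?_
  rw [MonoidHom.map_closure]
  refine closure_mono ?_
  rintro _ ⟨x, ⟨hxD, hxK⟩, rfl⟩
  exact ⟨hD g x hxD, mem_map_of_mem _ hxK⟩

theorem maximal_map {Γ : Type*} [Group Γ] {D : Set Γ} (hD : ∀ g : Γ, ∀ d ∈ D, g * d * g⁻¹ ∈ D)
    {K : Subgroup Γ} (hK : Maximal (NilGen D) K) (g : Γ) :
    Maximal (NilGen D) (K.map (MulAut.conj g).toMonoidHom) := by
  refine ⟨hK.1.map hD g, fun L hL hKL => ?_⟩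
  have h1 : K ≤ L.map (MulAut.conj g⁻¹).toMonoidHom := fun x hx =>
    ⟨g * x * g⁻¹, hKL ⟨x, hx, rfl⟩, by simp [mul_assoc]⟩
  intro x hx
  exact ⟨g⁻¹ * x * g, hK.2 (hL.map hD g⁻¹) h1 ⟨x, hx, by simp⟩, by simp [mul_assoc]⟩

/-- The normaliser condition, for elements of `D`: if `I < U` are both generated by elements of `D`
and `U` is nilpotent, then some element of `D` in `U` but outside `I` normalises `I`. -/
theorem exists_normalizing {Γ : Type*} [Group Γ] [WellFoundedGT (Subgroup Γ)] {D : Set Γ}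
    (hD : ∀ g : Γ, ∀ d ∈ D, g * d * g⁻¹ ∈ D) {I U : Subgroup Γ} (hU : NilGen D U)
    (hI : I ≤ closure (D ∩ I)) (hIU : I ≤ U) (hne : ¬ U ≤ I) :
    ∃ u ∈ D, u ∈ U ∧ u ∉ I ∧ u ∈ normalizer (I : Set Γ) := by
  -- `J` is maximal among the subgroups of `U` above `I` acquiring no new elements of `D`.
  obtain ⟨J, ⟨⟨hIJ, hJU, hJD⟩, hJmax⟩⟩ := exists_maximal_of_wellFoundedGT
    (fun J : Subgroup Γ => I ≤ J ∧ J ≤ U ∧ ∀ x ∈ D, x ∈ J → x ∈ I)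
    ⟨I, le_rfl, hIU, fun _ _ h => h⟩
  have hUJ : ¬ U ≤ J := fun h => hne <| hU.2.trans <| (closure_le _).2
    fun x hx => hJD x hx.1 (h hx.2)
  have hgrow : ∃ x ∈ U, x ∉ J ∧ x ∈ normalizer (J : Set Γ) := by
    obtain ⟨c, hc⟩ := (isNilpotent_iff_lowerCentralSeries U).1 hU.1
    classical
    have hex : ∃ k, U.lowerCentralSeries k ≤ J := ⟨c, hc ▸ bot_le⟩
    obtain ⟨k, hk⟩ : ∃ k, Nat.find hex = k + 1 := by
      refine Nat.exists_eq_succ_of_ne_zero fun h0 => hUJ ?_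
      have := Nat.find_spec hex
      rwa [h0] at this
    have h1 : U.lowerCentralSeries (k + 1) ≤ J := hk ▸ Nat.find_spec hex
    obtain ⟨x, hx, hxJ⟩ := SetLike.not_le_iff_exists.1 (Nat.find_min hex (m := k) (by omega))
    have hconj : ∀ y ∈ U.lowerCentralSeries k, ∀ j ∈ J, y * j * y⁻¹ ∈ J := by
      intro y hy j hj
      have := J.mul_mem (h1 (commutator_mem_commutator hy (hJU hj))) hj
      rwa [commutatorElement_def, inv_mul_cancel_right] at this
    refine ⟨x, lowerCentralSeries_le_self U k hx, hxJ, mem_normalizer_iff.2 fun j => ⟨hconj x hx j,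
      fun hj => ?_⟩⟩
    have := hconj _ (inv_mem hx) _ hj
    simpa [mul_assoc] using this
  obtain ⟨x, hxU, hxJ, hxN⟩ := hgrow
  have hnot : ¬ ∀ y ∈ D, y ∈ normalizer (J : Set Γ) ⊓ U → y ∈ I := fun h =>
    hxJ (hJmax ⟨hIJ.trans (le_inf le_normalizer hJU), inf_le_right, h⟩
      (le_inf le_normalizer hJU) ⟨hxN, hxU⟩)
  push Not at hnot
  obtain ⟨u, huD, ⟨huN, huU⟩, huI⟩ := hnot
  have hconj : ∀ y ∈ normalizer (J : Set Γ), ∀ i ∈ I, y * i * y⁻¹ ∈ I := by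
    intro y hy i hi
    have : closure (D ∩ I) ≤ I.comap (MulAut.conj y).toMonoidHom := (closure_le _).2
      fun z hz => hJD _ (hD y z hz.1) ((mem_normalizer_iff.1 hy z).1 (hIJ hz.2))
    exact this (hI hi)
  refine ⟨u, huD, huU, huI, mem_normalizer_iff.2 fun i => ⟨hconj u huN i, fun hi => ?_⟩⟩
  have := hconj _ (inv_mem huN) _ hi
  simpa [mul_assoc] using this

/-- A maximal `NilGen` subgroup contains every Engel element of `D` normalising it. -/
theorem mem_of_normalizes {Γ : Type*} [Group Γ] [WellFoundedGT (Subgroup Γ)] {D : Set Γ}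
    (hE : ∀ d ∈ D, ∀ x : Γ, ∃ n : ℕ, (eng d)^[n] x = 1) {V : Subgroup Γ}
    (hV : Maximal (NilGen D) V) {d : Γ} (hdD : d ∈ D) (hd : d ∈ normalizer (V : Set Γ)) :
    d ∈ V := by
  have hVM : V ≤ closure (insert d (V : Set Γ)) := fun v hv => subset_closure (Or.inr hv)
  have hdM : d ∈ closure (insert d (V : Set Γ)) := subset_closure (Or.inl rfl)
  refine hV.2 ⟨nilpotent_closure_insert V hV.1.1 d hd (hE d hdD), (closure_le _).2 ?_⟩ hVM hdM
  rintro y (rfl | hy)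
  · exact subset_closure ⟨hdD, hdM⟩
  · exact closure_mono (Set.inter_subset_inter_right D hVM) (hV.1.2 hy)

/-- Distinct maximal `NilGen` subgroups do not exist. For a pair `U ≠ V` whose intersection `I`
(cut down to the part generated by `D`) is as large as possible, pick `u ∈ U` and `v ∈ V` in `D`,
outside `I` and normalising `I`. Going down from `[u, v, …, v] = 1`, each left-normed commutator
normalises `V`; so does `u` itself, which forces `u ∈ V`. -/
theorem maximal_unique {Γ : Type*} [Group Γ] [WellFoundedGT (Subgroup Γ)] {D : Set Γ}
    (hD : ∀ g : Γ, ∀ d ∈ D, g * d * g⁻¹ ∈ D)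
    (hE : ∀ d ∈ D, ∀ x : Γ, ∃ n : ℕ, (eng d)^[n] x = 1) {U V : Subgroup Γ}
    (hU : Maximal (NilGen D) U) (hV : Maximal (NilGen D) V) : U = V := by
  by_contra hUV
  obtain ⟨I, ⟨⟨U, V, hU, hV, hUV, rfl⟩, hImax⟩⟩ := exists_maximal_of_wellFoundedGT
    (fun I : Subgroup Γ => ∃ U V, Maximal (NilGen D) U ∧ Maximal (NilGen D) V ∧ U ≠ V ∧
      I = closure (D ∩ (U ⊓ V : Subgroup Γ))) ⟨_, U, V, hU, hV, hUV, rfl⟩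
  set I := closure (D ∩ (U ⊓ V : Subgroup Γ)) with hIdef
  have hIle : I ≤ U ⊓ V := (closure_le _).2 Set.inter_subset_right
  have hIU : I ≤ U := hIle.trans inf_le_left
  have hIV : I ≤ V := hIle.trans inf_le_right
  have hIgen : I ≤ closure (D ∩ I) :=
    (closure_le _).2 fun x hx => subset_closure ⟨hx.1, subset_closure hx⟩
  obtain ⟨u, huD, huU, huI, huN⟩ := exists_normalizing hD hU.1 hIgen hIU
    fun h => hUV (hU.eq_of_le hV.1 (h.trans hIV))
  obtain ⟨v, hvD, hvV, hvI, hvN⟩ := exists_normalizing hD hV.1 hIgen hIV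
    fun h => hUV (hV.eq_of_le hU.1 (h.trans hIU)).symm
  have key : ∀ n : ℕ, ∀ y ∈ normalizer (I : Set Γ), (eng v)^[n] y = 1 →
      y ∈ normalizer (V : Set Γ) := by
    intro n
    induction n with
    | zero => exact fun y _ hy => (show y = 1 from hy) ▸ one_mem _
    | succ n ih =>
      intro y hyN hy
      have hyeng := ih (eng v y)
        (mul_mem (inv_mem hyN) (mul_mem (mul_mem hvN hyN) (inv_mem hvN))) hy
      have hw : y⁻¹ * v * y ∈ normalizer (V : Set Γ) := by
        have := mul_mem hyeng (le_normalizer hvV)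
        simpa [eng, mul_assoc] using this
      have hwD : y⁻¹ * v * y ∈ D := by simpa using hD y⁻¹ v hvD
      have hwV := mem_of_normalizes hE hV hwD hw
      -- `V` and its conjugate `y⁻¹ V y` share `I` and `y⁻¹ v y ∉ I`, so they coincide.
      have hVV : V = V.map (MulAut.conj y⁻¹).toMonoidHom := by
        by_contra hne
        have hwV' : y⁻¹ * v * y ∈ V.map (MulAut.conj y⁻¹).toMonoidHom := ⟨v, hvV, by simp⟩
        have hIV' : I ≤ V.map (MulAut.conj y⁻¹).toMonoidHom := fun i hi =>
          ⟨y * i * y⁻¹, hIV ((mem_normalizer_iff.1 hyN i).1 hi), by simp [mul_assoc]⟩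
        have hle := hImax ⟨V, _, hV, maximal_map hD hV y⁻¹, hne, rfl⟩
          (hIgen.trans (closure_mono (Set.inter_subset_inter_right D (le_inf hIV hIV'))))
        exact hvI ((mem_normalizer_iff''.1 hyN v).2 (hle (subset_closure ⟨hwD, hwV, hwV'⟩)))
      refine mem_normalizer_iff''.2 fun x => ⟨fun hx => ?_, fun hx => ?_⟩
      · rw [hVV]; exact ⟨x, hx, by simp⟩
      · rw [hVV] at hx
        obtain ⟨z, hz, hzx⟩ := hx
        have : z = x := by simpa using hzx
        exact this ▸ hz
  obtain ⟨n, hn⟩ := hE v hvD u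
  exact huI (subset_closure ⟨huD, huU, mem_of_normalizes hE hV huD (key n u huN hn)⟩)

/-- Baer's theorem: under Max, a conjugation-invariant set of left Engel elements generates a
nilpotent subgroup. -/
theorem baer {Γ : Type*} [Group Γ] [WellFoundedGT (Subgroup Γ)] {D : Set Γ}
    (hD : ∀ g : Γ, ∀ d ∈ D, g * d * g⁻¹ ∈ D)
    (hE : ∀ d ∈ D, ∀ x : Γ, ∃ n : ℕ, (eng d)^[n] x = 1) :
    Group.IsNilpotent (closure D) := by
  have hbot : NilGen D ⊥ := ⟨inferInstance, bot_le⟩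
  obtain ⟨V, hV⟩ := exists_maximal_of_wellFoundedGT (NilGen D) ⟨⊥, hbot⟩
  have hDV : D ⊆ V := by
    intro d hd
    -- All conjugates of `V` are maximal, so `V` is normal by uniqueness.
    refine mem_of_normalizes hE hV hd (mem_normalizer_iff.2 fun x => ?_)
    have hVV := maximal_unique hD hE hV (maximal_map hD hV d)
    refine ⟨fun hx => hVV ▸ ⟨x, hx, by simp⟩, fun hx => ?_⟩
    rw [hVV] at hx
    obtain ⟨z, hz, hzx⟩ := hx
    have : z = x := by simpa using hzx
    exact this ▸ hz
  have : closure D = V := le_antisymm ((closure_le _).2 hDV)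
    (hV.1.2.trans (closure_mono Set.inter_subset_left))
  rw [this]
  exact hV.1.1

end BaerFitting

open BaerFitting in
/-- If `G` satisfies Max (every subgroup is finitely generated) and `H` is a group of
nil-automorphisms of `G`, then `[G, H]` lies in the Fitting subgroup of `G`. -/
theorem stmt_2 {G : Type*} [Group G]
    (hMax : ∀ K : Subgroup G, K.FG)
    (H : Subgroup (MulAut G))
    (hnil : ∀ h ∈ H, ∀ g : G, ∃ n : ℕ, (fun a => a⁻¹ * h a)^[n] g = 1) :
    Subgroup.closure {x : G | ∃ g : G, ∃ h ∈ H, x = g⁻¹ * h g} ≤ fittingSubgroup G := by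
  rw [Subgroup.closure_le]
  rintro _ ⟨g, h, hh, rfl⟩
  have := wf_of_fg hMax
  let φ : Multiplicative ℤ →* MulAut G := zpowersHom _ h
  have := wf_semi φ
  let ι : G →* G ⋊[φ] Multiplicative ℤ := SemidirectProduct.inl
  let t : G ⋊[φ] Multiplicative ℤ := SemidirectProduct.inr (Multiplicative.ofAdd 1)
  have ht : ∀ a : G, t * ι a * t⁻¹ = ι (h a) := by
    intro a
    have := SemidirectProduct.inl_aut (φ := φ) (Multiplicative.ofAdd 1) a
    rw [map_inv] at this
    rw [← this]
    simp [φ, ι]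
  have hsc : Function.Semiconj ι (fun a => a⁻¹ * h a) (eng t) := fun a => by
    simp only [eng, ht, map_mul, map_inv]
  have htE : ∀ x, ∃ n : ℕ, (eng t)^[n] x = 1 := by
    intro x
    have hx : eng t x ∈ ι.range := by
      rw [SemidirectProduct.range_inl_eq_ker_rightHom, MonoidHom.mem_ker]
      simp [eng]
    obtain ⟨a, ha⟩ := hx
    obtain ⟨n, hn⟩ := hnil h hh a
    refine ⟨n + 1, ?_⟩
    rw [Function.iterate_succ_apply, ← ha, ← (hsc.iterate_right n).eq, hn, map_one]
  have hD : ∀ c, ∀ d ∈ conjugatesOf t, c * d * c⁻¹ ∈ conjugatesOf t := fun c d hd =>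
    IsConj.trans hd (isConj_iff.2 ⟨c, rfl⟩)
  have hnilp : Group.IsNilpotent (Subgroup.closure (conjugatesOf t)) := by
    refine baer hD fun d hd x => ?_
    obtain ⟨c, rfl⟩ := isConj_iff.1 hd
    obtain ⟨n, hn⟩ := htE (c⁻¹ * x * c)
    refine ⟨n, ?_⟩
    have hsc' : Function.Semiconj (MulAut.conj c) (eng t) (eng (c * t * c⁻¹)) := fun a => by
      simp [eng, mul_assoc]
    have := (hsc'.iterate_right n).eq (c⁻¹ * x * c)
    rw [hn, map_one] at this
    simpa [mul_assoc] using this.symm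
  set T := Subgroup.closure (conjugatesOf t) with hT
  have hTn : T.Normal := ⟨fun x hx c => by
    have : T ≤ T.comap (MulAut.conj c).toMonoidHom := (Subgroup.closure_le _).2 fun d hd =>
      Subgroup.subset_closure (hD c d hd)
    exact this hx⟩
  have hinj : Function.Injective (ι.subgroupComap T) := fun a b hab =>
    Subtype.ext (SemidirectProduct.inl_injective (congrArg Subtype.val hab))
  have hN : Group.IsNilpotent (T.comap ι) :=
    (Group.isNilpotent_congr (MonoidHom.ofInjective hinj)).2 inferInstance
  refine (le_iSup_of_le (T.comap ι) (le_iSup_of_le inferInstance (le_iSup_of_le hN le_rfl)) :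
    T.comap ι ≤ fittingSubgroup G) ?_
  change ι (g⁻¹ * h g) ∈ T
  have h1 : t ∈ T := Subgroup.subset_closure (mem_conjugatesOf_self)
  have : ι (g⁻¹ * h g) = ((ι g)⁻¹ * t * (ι g)⁻¹⁻¹) * t⁻¹ := by
    rw [map_mul, ← ht, map_inv]; group
  rw [this]
  exact T.mul_mem (hTn.conj_mem t h1 _) (T.inv_mem h1)
end

section
/- Let G be a finite group and H a group of automorphisms of G each of which is a nil-automorphism. Then H is nilpotent and [G, H] is contained in the Fitting subgroup of G. -/
open Subgroup

/-! ### Subgroups generated by elements of a conjugation-invariant set -/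

/-- For a set `C`, the `p`-subgroups that are generated by their elements lying in `C`. -/
def IsGenBy {Γ : Type*} [Group Γ] (p : ℕ) (C : Set Γ) (A : Subgroup Γ) : Prop :=
  IsPGroup p A ∧ closure (C ∩ A) = A

lemma isGenBy_map_conj {Γ : Type*} [Group Γ] {p : ℕ} {C : Set Γ}
    (hC : ∀ c ∈ C, ∀ g : Γ, g * c * g⁻¹ ∈ C) {A : Subgroup Γ} (hA : IsGenBy p C A) (g : Γ) :
    IsGenBy p C (A.map (MulAut.conj g).toMonoidHom) := by
  refine ⟨hA.1.map _, le_antisymm (by simp [closure_le]) ?_⟩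
  conv_lhs => rw [← hA.2, MonoidHom.map_closure]
  refine closure_mono ?_
  rintro _ ⟨c, ⟨hc, hcA⟩, rfl⟩
  exact ⟨hC c hc g, c, hcA, rfl⟩

lemma maximal_map_conj {Γ : Type*} [Group Γ] {p : ℕ} {C : Set Γ}
    (hC : ∀ c ∈ C, ∀ g : Γ, g * c * g⁻¹ ∈ C) {A : Subgroup Γ} (hA : Maximal (IsGenBy p C) A)
    (g : Γ) : Maximal (IsGenBy p C) (A.map (MulAut.conj g).toMonoidHom) := by
  refine ⟨isGenBy_map_conj hC hA.1 g, fun B hB hle => ?_⟩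
  have h1 : A ≤ B.map (MulAut.conj g⁻¹).toMonoidHom := by
    intro a ha
    exact ⟨g * a * g⁻¹, hle ⟨a, ha, rfl⟩, by simp [mul_assoc]⟩
  intro b hb
  have h2 := hA.2 (isGenBy_map_conj hC hB g⁻¹) h1 ⟨b, hb, rfl⟩
  exact ⟨_, h2, by simp [mul_assoc]⟩

lemma mem_of_mem_normalizer {Γ : Type*} [Group Γ] {p : ℕ} {C : Set Γ}
    {A : Subgroup Γ} (hA : Maximal (IsGenBy p C) A) {z : Γ} (hz : z ∈ C)
    (hzp : IsPGroup p (zpowers z)) (hn : z ∈ normalizer (A : Set Γ)) : z ∈ A := by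
  have h : IsGenBy p C (A ⊔ zpowers z) := by
    refine ⟨hA.1.1.to_sup_of_normal_left' hzp (by simpa using hn), le_antisymm ?_ ?_⟩
    · exact (closure_le _).2 Set.inter_subset_right
    · refine sup_le ?_ ?_
      · conv_lhs => rw [← hA.1.2]
        exact closure_mono (Set.inter_subset_inter_right _ (le_sup_left : A ≤ A ⊔ zpowers z))
      · rw [zpowers_le]
        exact subset_closure ⟨hz, mem_sup_right (mem_zpowers z)⟩
  exact hA.2 h le_sup_left (mem_sup_right (mem_zpowers z))

/-- The normalizer condition of the nilpotent group `A`, sharpened to produce a normalizing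
element that lies in `C`. -/
lemma exists_mem_normalizer {Γ : Type*} [Group Γ] [Finite Γ] {p : ℕ} [Fact p.Prime] {C : Set Γ}
    (hC : ∀ c ∈ C, ∀ g : Γ, g * c * g⁻¹ ∈ C) {A D : Subgroup Γ} (hA : IsGenBy p C A)
    (hD : closure (C ∩ D) = D) (hDA : D ≤ A) (hne : ¬ A ≤ D) :
    ∃ x ∈ C, x ∈ A ∧ x ∉ D ∧ x ∈ normalizer (D : Set Γ) := by
  by_contra! hcon
  apply hne
  set K : Subgroup Γ := normalizer (D : Set Γ) ⊓ A with hK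
  have hDK : D ≤ K := le_inf le_normalizer hDA
  -- By assumption `C ∩ K = C ∩ D`, so whatever normalizes `K` also normalizes `D`.
  have hCK : ∀ c ∈ C, c ∈ K → c ∈ D := by
    intro c hc hcK
    by_contra hcD
    exact hcon c hc hcK.2 hcD hcK.1
  have hNK : ∀ g ∈ normalizer (K : Set Γ), g ∈ normalizer (D : Set Γ) := by
    have key : normalizer (K : Set Γ) ≤ normalizer (closure (C ∩ D) : Set Γ) := by
      refine le_trans ?_ (normalizer_le_normalizer_closure _)
      rw [le_set_normalizer_iff]
      rintro g hg c ⟨hc, hcD⟩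
      exact ⟨hC c hc g, hCK _ (hC c hc g) ((mem_normalizer_iff.1 hg c).1 (hDK hcD))⟩
    rw [hD] at key
    exact fun g hg => key hg
  have : Group.IsNilpotent A := hA.1.isNilpotent
  have hKA : K.subgroupOf A = ⊤ := by
    refine normalizerCondition_iff_only_full_group_self_normalizing.1
      (Group.normalizerCondition_of_isNilpotent (G := A)) _ (le_antisymm ?_ le_normalizer)
    intro g hg
    rw [mem_subgroupOf]
    refine ⟨hNK _ ?_, g.2⟩
    rw [mem_normalizer_iff] at hg ⊢
    intro h
    by_cases hh : h ∈ A
    · exact hg ⟨h, hh⟩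
    · have h1 : h ∉ K := fun h' => hh h'.2
      have h2 : (g : Γ) * h * (g : Γ)⁻¹ ∉ K := fun h' => hh <| by
        have := A.mul_mem (A.mul_mem (A.inv_mem g.2) h'.2) g.2
        simpa [mul_assoc] using this
      exact iff_of_false h1 h2
  have hAK : A ≤ K := subgroupOf_eq_top.1 hKA
  rw [← hA.2, closure_le]
  exact fun c hc => hCK c hc.1 (hAK hc.2)

/-! ### Baer's theorem for elements of prime power order -/

/-- An Alperin–Lyons style argument: among the intersections of two distinct maximal members, a
largest one leads to a contradiction, the Engel condition replacing the usual hypothesis on pairs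
of conjugates. -/
lemma maximal_unique {Γ : Type*} [Group Γ] [Finite Γ] {p : ℕ} [Fact p.Prime] {C : Set Γ}
    (hC : ∀ c ∈ C, ∀ g : Γ, g * c * g⁻¹ ∈ C) (hCp : ∀ c ∈ C, IsPGroup p (zpowers c))
    (hE : ∀ c ∈ C, ∀ g : Γ, ∃ n : ℕ, (fun a => a⁻¹ * (c * a * c⁻¹))^[n] g = 1)
    {A₀ B₀ : Subgroup Γ} (hA₀ : Maximal (IsGenBy p C) A₀) (hB₀ : Maximal (IsGenBy p C) B₀) :
    A₀ = B₀ := by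
  by_contra hne₀
  obtain ⟨D, -, ⟨A, B, hA, hB, hne, rfl⟩, hmax⟩ := Finite.exists_le_maximal
    (p := fun D : Subgroup Γ => ∃ A B, Maximal (IsGenBy p C) A ∧ Maximal (IsGenBy p C) B ∧
      A ≠ B ∧ D = closure (C ∩ ((A : Set Γ) ∩ B))) ⟨A₀, B₀, hA₀, hB₀, hne₀, rfl⟩
  set D := closure (C ∩ ((A : Set Γ) ∩ B)) with hD
  have hDA : D ≤ A := (closure_le _).2 fun c hc => hc.2.1
  have hDB : D ≤ B := (closure_le _).2 fun c hc => hc.2.2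
  have hDD : closure (C ∩ (D : Set Γ)) = D := by
    refine le_antisymm ((closure_le _).2 Set.inter_subset_right) ?_
    conv_lhs => rw [hD]
    exact closure_mono fun c hc => ⟨hc.1, subset_closure hc⟩
  obtain ⟨x, hxC, hxA, hxD, hxN⟩ := exists_mem_normalizer hC hA.1 hDD hDA
    fun h => hne (hA.eq_of_le hB.1 (h.trans hDB))
  obtain ⟨y, hyC, hyB, hyD, hyN⟩ := exists_mem_normalizer hC hB.1 hDD hDB
    fun h => hne (hB.eq_of_le hA.1 (h.trans hDA)).symm
  -- By the choice of `D`, the only maximal member containing `D` and `x` is `A`.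
  have huniq : ∀ R, Maximal (IsGenBy p C) R → D ≤ R → x ∈ R → R = A := by
    intro R hR hDR hxR
    by_contra hRA
    have h1 : D ≤ closure (C ∩ ((R : Set Γ) ∩ A)) := by
      conv_lhs => rw [← hDD]
      exact closure_mono fun c hc => ⟨hc.1, hDR hc.2, hDA hc.2⟩
    exact hxD (hmax ⟨R, A, hR, hA, hRA, rfl⟩ h1 (subset_closure ⟨hxC, hxR, hxA⟩))
  -- Normalizing `A` propagates backwards along the sequence of commutators `[g, x, …, x]`.
  have hback : ∀ g ∈ normalizer (D : Set Γ), g⁻¹ * (x * g * x⁻¹) ∈ normalizer (A : Set Γ) →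
      g ∈ normalizer (A : Set Γ) := by
    intro g hg hgA
    have hx' : g⁻¹ * x * g ∈ normalizer (A : Set Γ) := by
      have := mul_mem hgA (le_normalizer hxA)
      simpa [mul_assoc] using this
    have hxC' : g⁻¹ * x * g ∈ C := by simpa using hC x hxC g⁻¹
    have hxA' : g⁻¹ * x * g ∈ A := mem_of_mem_normalizer hA hxC' (hCp _ hxC') hx'
    have := huniq _ (maximal_map_conj hC hA g)
      (fun d hd => ⟨g⁻¹ * d * g, hDA ((mem_normalizer_iff''.1 hg d).1 hd), by simp [mul_assoc]⟩)
      ⟨_, hxA', by simp [mul_assoc]⟩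
    exact mem_normalizer_iff_map_conj_eq.2 this
  have hiter : ∀ (n : ℕ) (g : Γ), g ∈ normalizer (D : Set Γ) →
      (fun a => a⁻¹ * (x * a * x⁻¹))^[n] g = 1 → g ∈ normalizer (A : Set Γ) := by
    intro n
    induction n with
    | zero => rintro g - h; rw [Function.iterate_zero, id] at h; rw [h]; exact one_mem _
    | succ n ih =>
      intro g hg h
      exact hback g hg (ih _ (mul_mem (inv_mem hg) (mul_mem (mul_mem hxN hg) (inv_mem hxN))) h)
  obtain ⟨n, hn⟩ := hE x hxC y
  have hyA : y ∈ A := mem_of_mem_normalizer hA hyC (hCp y hyC) (hiter n y hyN hn)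
  exact hyD (subset_closure ⟨hyC, hyA, hyB⟩)

/-- Baer's theorem for elements of prime power order: a left Engel `p`-element of a finite group
lies in a normal `p`-subgroup. -/
lemma exists_normal_of_engel {Γ : Type*} [Group Γ] [Finite Γ] {p : ℕ} [Fact p.Prime] {x : Γ}
    (hxp : IsPGroup p (zpowers x))
    (hE : ∀ g : Γ, ∃ n : ℕ, (fun a => a⁻¹ * (x * a * x⁻¹))^[n] g = 1) :
    ∃ N : Subgroup Γ, N.Normal ∧ IsPGroup p N ∧ x ∈ N := by
  let C : Set Γ := Set.range fun t : Γ => t * x * t⁻¹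
  have hC : ∀ c ∈ C, ∀ g : Γ, g * c * g⁻¹ ∈ C := by
    rintro _ ⟨t, rfl⟩ g
    exact ⟨g * t, by simp [mul_assoc]⟩
  have hCp : ∀ c ∈ C, IsPGroup p (zpowers c) := by
    rintro _ ⟨t, rfl⟩
    have := hxp.map (MulAut.conj t).toMonoidHom
    rwa [MonoidHom.map_zpowers] at this
  have hCE : ∀ c ∈ C, ∀ g : Γ, ∃ n : ℕ, (fun a => a⁻¹ * (c * a * c⁻¹))^[n] g = 1 := by
    rintro _ ⟨t, rfl⟩ g
    obtain ⟨n, hn⟩ := hE (t⁻¹ * g * t)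
    refine ⟨n, ?_⟩
    have hsc : Function.Semiconj (fun a => t⁻¹ * a * t)
        (fun a => a⁻¹ * (t * x * t⁻¹ * a * (t * x * t⁻¹)⁻¹)) (fun a => a⁻¹ * (x * a * x⁻¹)) := by
      intro a
      simp [mul_assoc]
    have := (hsc.iterate_right n).eq g
    rw [hn] at this
    have h2 := congrArg (fun a => t * a * t⁻¹) this
    simpa [mul_assoc] using h2
  have hxC : x ∈ C := ⟨1, by simp⟩
  have hgen : IsGenBy p C (zpowers x) := by
    refine ⟨hxp, le_antisymm ((closure_le _).2 Set.inter_subset_right) ?_⟩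
    rw [zpowers_le]
    exact subset_closure ⟨hxC, mem_zpowers x⟩
  obtain ⟨M, hxM, hM⟩ := Finite.exists_le_maximal hgen
  exact ⟨M, normal_iff_map_conj_eq.2 fun g =>
    maximal_unique hC hCp hCE (maximal_map_conj hC hM g) hM, hM.1.1, hxM (mem_zpowers x)⟩

/-! ### Nil-automorphisms of prime power order -/

lemma exists_characteristic {G : Type*} [Group G] {p : ℕ} {N : Subgroup G}
    (hN : N.Normal) (hNp : IsPGroup p N) :
    ∃ K : Subgroup G, K.Characteristic ∧ IsPGroup p K ∧ N ≤ K := by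
  refine ⟨⨆ M ∈ {M : Subgroup G | M.Normal ∧ IsPGroup p M}, M, ?_,
    Sylow.biSup_of_normal _ _ (fun M hM => hM.2) (fun M hM => hM.1),
    le_iSup₂_of_le N ⟨hN, hNp⟩ le_rfl⟩
  rw [characteristic_iff_map_le]
  intro φ
  simp only [Subgroup.map_iSup]
  exact iSup₂_le fun M hM => le_iSup₂_of_le (M.map φ.toMonoidHom)
    ⟨hM.1.map _ φ.surjective, hM.2.map _⟩ le_rfl

/-- Baer's theorem applied in `G ⋊ ⟨a⟩`: a nil-automorphism of `p`-power order acts trivially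
modulo some characteristic `p`-subgroup. -/
lemma exists_characteristic_of_nil {G : Type*} [Group G] [Finite G] {p : ℕ} [Fact p.Prime] {a : MulAut G}
    (hap : IsPGroup p (zpowers a))
    (hnil : ∀ g : G, ∃ n : ℕ, (fun b => b⁻¹ * a b)^[n] g = 1) :
    ∃ N : Subgroup G, N.Characteristic ∧ IsPGroup p N ∧ ∀ g, g⁻¹ * a g ∈ N := by
  let φ : zpowers a →* MulAut G := (zpowers a).subtype
  let Γ := G ⋊[φ] zpowers a
  have : Finite Γ := Finite.of_equiv _ SemidirectProduct.equivProd.symm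
  let α : zpowers a := ⟨a, mem_zpowers a⟩
  let x : Γ := SemidirectProduct.inr α
  let E : Γ → Γ := fun w => w⁻¹ * (x * w * x⁻¹)
  have hxp : IsPGroup p (zpowers x) := by
    have : zpowers x = (zpowers α).map (SemidirectProduct.inr : zpowers a →* Γ) := by
      rw [MonoidHom.map_zpowers]
    rw [this]
    exact (hap.to_subgroup _).map _
  have hinl : ∀ g : G, E (SemidirectProduct.inl g) = SemidirectProduct.inl (g⁻¹ * a g) := by
    intro g
    have h := SemidirectProduct.inl_aut (φ := φ) α g
    rw [map_inv] at h
    change (SemidirectProduct.inl g)⁻¹ * (x * SemidirectProduct.inl g * x⁻¹) = _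
    rw [map_mul, map_inv]
    exact congrArg _ h.symm
  have hsemi : Function.Semiconj (SemidirectProduct.inl : G → Γ) (fun b => b⁻¹ * a b) E :=
    fun g => (hinl g).symm
  -- After one step the commutator lies in `G`, since `⟨a⟩` is abelian.
  have hE1 : ∀ w : Γ, ∃ g : G, E w = SemidirectProduct.inl g := by
    intro w
    refine ⟨(E w).left, ?_⟩
    ext
    · rfl
    · have : (E w).right = 1 := by
        change w.right⁻¹ * (α * w.right * α⁻¹) = 1
        have hc : α * w.right = w.right * α := by
          obtain ⟨_, k, rfl⟩ := w.right
          exact Subtype.ext (Commute.self_zpow a k).eq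
        rw [hc, mul_inv_cancel_right, inv_mul_cancel]
      rw [this]; rfl
  obtain ⟨N, hN, hNp, hxN⟩ := exists_normal_of_engel hxp (fun w => by
    obtain ⟨g, hg⟩ := hE1 w
    obtain ⟨n, hn⟩ := hnil g
    refine ⟨n + 1, ?_⟩
    change E^[n] (E w) = 1
    rw [hg, ← (hsemi.iterate_right n).eq g, hn, map_one])
  obtain ⟨K, hK, hKp, hNK⟩ := exists_characteristic (hN.comap SemidirectProduct.inl)
    (hNp.comap_of_injective _ SemidirectProduct.inl_injective)
  refine ⟨K, hK, hKp, fun g => hNK ?_⟩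
  rw [mem_comap, ← hinl g]
  change _⁻¹ * (x * _ * x⁻¹) ∈ N
  have h := mul_mem (hN.conj_mem x hxN (SemidirectProduct.inl g)⁻¹) (inv_mem hxN)
  rw [inv_inv] at h
  simpa only [mul_assoc] using h

/-! ### Passing from prime power order to the whole group -/

lemma eq_top_of_sylow_le {G : Type*} [Group G] [Finite G] (K : Subgroup G)
    (h : ∀ q : ℕ, [Fact q.Prime] → ∃ Q : Sylow q G, (Q : Subgroup G) ≤ K) : K = ⊤ := by
  refine eq_top_of_card_eq K (Nat.dvd_antisymm (card_subgroup_dvd_card K) ?_)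
  rw [← Nat.factorization_prime_le_iff_dvd Nat.card_pos.ne' Nat.card_pos.ne']
  intro q hq
  have : Fact q.Prime := ⟨hq⟩
  obtain ⟨Q, hQ⟩ := h q
  have := card_dvd_of_le hQ
  rw [Q.card_eq_multiplicity] at this
  exact (hq.pow_dvd_iff_le_factorization Nat.card_pos.ne').1 this

lemma isNilpotent_of_commute {G : Type*} [Group G] [Finite G]
    (h : ∀ p q : ℕ, p.Prime → q.Prime → p ≠ q → ∀ a b : G, IsPGroup p (zpowers a) →
      IsPGroup q (zpowers b) → Commute a b) : Group.IsNilpotent G := by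
  refine (Group.isNilpotent_of_finite_tfae.out 0 3 rfl rfl).2 fun p hp P => ?_
  rw [← normalizer_eq_top_iff]
  refine eq_top_of_sylow_le _ fun q hq => ?_
  by_cases hpq : p = q
  · subst hpq
    exact ⟨P, le_normalizer⟩
  · obtain ⟨Q⟩ : Nonempty (Sylow q G) := inferInstance
    refine ⟨Q, le_set_normalizer_iff.2 fun b hb a ha => ?_⟩
    have := h p q hp.out hq.out hpq a b (P.isPGroup'.to_le (zpowers_le.2 ha))
      (Q.isPGroup'.to_le (zpowers_le.2 hb))
    rw [← this.eq, mul_inv_cancel_right]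
    exact ha

lemma le_fittingSubgroup {G : Type*} [Group G] {N : Subgroup G} (hN : N.Normal)
    (hnil : Group.IsNilpotent N) : N ≤ fittingSubgroup G :=
  le_iSup_of_le N (le_iSup_of_le hN (le_iSup_of_le hnil le_rfl))

/-- The automorphisms acting trivially modulo the Fitting subgroup. -/
def trivialModFitting (G : Type*) [Group G] : Subgroup (MulAut G) where
  carrier := {h | ∀ g, g⁻¹ * h g ∈ fittingSubgroup G}
  one_mem' g := by simp
  mul_mem' {a b} ha hb g := by
    have := mul_mem (hb g) (ha (b g))
    simpa [mul_assoc] using this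
  inv_mem' {a} ha g := by
    have := inv_mem (ha (a⁻¹ g))
    simpa using this

/-- An automorphism acting trivially modulo `M` fixes pointwise every characteristic subgroup that
meets `M` trivially. -/
lemma eq_of_trivial_mod {G : Type*} [Group G] {M N : Subgroup G} (hdis : Disjoint M N)
    (hN : N.Characteristic) {a : MulAut G} (ha : ∀ g, g⁻¹ * a g ∈ M) {u : G} (hu : u ∈ N) :
    a u = u := by
  have h1 : a u ∈ N := characteristic_iff_map_le.1 hN a ⟨u, hu, rfl⟩
  have h2 : u⁻¹ * a u = 1 := disjoint_def.1 hdis (ha u) (mul_mem (inv_mem hu) h1)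
  exact (inv_mul_eq_one.1 h2).symm

/-- If `G` is a finite group and `H` a group of nil-automorphisms of `G`, then `H` is
nilpotent and `[G, H]` is contained in the Fitting subgroup of `G`. -/
theorem stmt_3 {G : Type*} [Group G] [Finite G]
    (H : Subgroup (MulAut G))
    (hnil : ∀ h ∈ H, ∀ g : G, ∃ n : ℕ, (fun a => a⁻¹ * h a)^[n] g = 1) :
    Group.IsNilpotent H ∧
      Subgroup.closure {x : G | ∃ g : G, ∃ h ∈ H, x = g⁻¹ * h g} ≤ fittingSubgroup G := by
  -- The nil-automorphisms of `p`-power order in `H` act trivially modulo a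
  -- characteristic `p`-subgroup.
  have key : ∀ (p : ℕ), p.Prime → ∀ a : H, IsPGroup p (zpowers a) →
      ∃ N : Subgroup G, N.Characteristic ∧ IsPGroup p N ∧ ∀ g, g⁻¹ * (a : MulAut G) g ∈ N := by
    intro p hp a ha
    have : Fact p.Prime := ⟨hp⟩
    refine exists_characteristic_of_nil ?_ (hnil a a.2)
    have := ha.map H.subtype
    rwa [MonoidHom.map_zpowers] at this
  constructor
  · refine isNilpotent_of_commute fun p q hp hq hpq a b ha hb => ?_
    obtain ⟨M, hM, hMp, haM⟩ := key p hp a ha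
    obtain ⟨N, hN, hNq, hbN⟩ := key q hq b hb
    have : Fact p.Prime := ⟨hp⟩
    have : Fact q.Prime := ⟨hq⟩
    have hdis : Disjoint M N := hMp.disjoint_of_ne p q hpq M N hNq
    have hau : ∀ u ∈ N, (a : MulAut G) u = u := fun u hu =>
      eq_of_trivial_mod hdis hN haM hu
    have hbv : ∀ v ∈ M, (b : MulAut G) v = v := fun v hv =>
      eq_of_trivial_mod hdis.symm hM hbN hv
    ext g
    obtain ⟨v, hv⟩ : ∃ v, v = g⁻¹ * (a : MulAut G) g := ⟨_, rfl⟩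
    obtain ⟨u, hu⟩ : ∃ u, u = g⁻¹ * (b : MulAut G) g := ⟨_, rfl⟩
    have hvM : v ∈ M := hv ▸ haM g
    have huN : u ∈ N := hu ▸ hbN g
    have hag : (a : MulAut G) g = g * v := by rw [hv, mul_inv_cancel_left]
    have hbg : (b : MulAut G) g = g * u := by rw [hu, mul_inv_cancel_left]
    have huv : v * u = u * v :=
      commute_of_normal_of_disjoint M N inferInstance inferInstance hdis v u hvM huN
    change (a : MulAut G) ((b : MulAut G) g) = (b : MulAut G) ((a : MulAut G) g)
    rw [hbg, hag, map_mul, map_mul, hau u huN, hbv v hvM, hag, hbg, mul_assoc, huv, mul_assoc]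
  · have htop : (trivialModFitting G).subgroupOf H = ⊤ := by
      refine eq_top_of_sylow_le _ fun q hq => ?_
      obtain ⟨Q⟩ : Nonempty (Sylow q H) := inferInstance
      refine ⟨Q, fun a ha => ?_⟩
      obtain ⟨N, hN, hNq, haN⟩ := key q hq.out a (Q.isPGroup'.to_le (zpowers_le.2 ha))
      exact fun g => le_fittingSubgroup inferInstance hNq.isNilpotent (haN g)
    rw [closure_le]
    rintro _ ⟨g, h, hh, rfl⟩
    exact subgroupOf_eq_top.1 htop hh g
end

section
/- Let G be a locally graded group and H a finite group of nil-automorphisms of G. Then H is nilpotent. -/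
/-!
Write `[L, y]` for the group generated by the commutators `l⁻¹ * (y * l * y⁻¹)`, `l ∈ L`.

If the finite group `H` is not nilpotent, then some element `y` of prime power order `q ^ k` is not
left Engel in `H`: by Baer's theorem (`isPGroup_normalClosure`), left Engel elements of `q`-power
order lie in normal `q`-subgroups, so otherwise every Sylow subgroup would be normal. A minimal
`y`-invariant subgroup `L` containing a term of a sequence `[h, y, …, y]` that never reaches `1`
satisfies `L = [L, y] ≠ 1`. The heart of the proof, `eq_bot_of_driven`, is that no such `L` exists.

On a finite group `Q` this is again Baer's theorem. Applied in the semidirect product `Q ⋊ ⟨α⟩`, it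
shows that a nil-automorphism `α` of `q`-power order acts trivially on `Q / O_q(Q)`; hence the image
of `⟨L, y⟩` in `Aut Q` is a `q`-group, hence nilpotent, and `L = [L, y]` acts trivially
(`action_trivial`).

For a locally graded `G`, nilness of `y` gives `g` not fixed by `L` such that `g⁻¹ * y g` is fixed
by `L`. The elements `g⁻¹ * l g` generate a finitely generated subgroup `M ≠ 1`, invariant under
`L`, under the conjugate `L ^ g` and under the nil-automorphism `v = y ^ g`. Let `M ⧸ K` be a
nontrivial finite quotient, with `K` characteristic. By the finite case `L` and `L ^ g` act
trivially on it. This makes it abelian and makes `l ↦ g⁻¹ * l g` a homomorphism from `L` onto it.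
From `L = [L, v]` it follows that `m ↦ m⁻¹ * v m` is onto, hence bijective, on the finite group
`M ⧸ K`, whereas it should be nil.
-/

/-- A group is locally graded if every nontrivial finitely generated subgroup has a
proper normal subgroup of finite index. -/
def LocallyGraded (G : Type*) [Group G] : Prop :=
  ∀ K : Subgroup G, K ≠ ⊥ → K.FG →
    ∃ N : Subgroup ↥K, N.Normal ∧ N ≠ ⊤ ∧ N.FiniteIndex

/-! ### Nil maps -/

/-- An endomap `α` of a group is *nil* if for each `g` the sequence `g`, `[g, α]`,
`[g, α, α]`, … reaches `1`, where `[g, α] = g⁻¹ * α g`. -/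
def NilAut {G : Type*} [Group G] (α : G → G) : Prop :=
  ∀ g : G, ∃ n : ℕ, (fun a => a⁻¹ * α a)^[n] g = 1

/-- If iterating `f` leads from a point outside `P` into `P`, then some point of the orbit
lies outside `P` while its image lies in `P`. -/
lemma exists_last_step {X : Type*} (f : X → X) (P : X → Prop) (g : X) (h0 : ¬ P g)
    (n : ℕ) (hn : P (f^[n] g)) : ∃ m, ¬ P (f^[m] g) ∧ P (f (f^[m] g)) := by
  induction n with
  | zero => exact absurd hn h0
  | succ n ih =>
    by_cases h : P (f^[n] g)
    · exact ih h
    · exact ⟨n, h, by rwa [Function.iterate_succ_apply'] at hn⟩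

/-- Nilness passes along a homomorphism `φ` intertwining `α` and `β`, pointwise on its range. -/
lemma nil_map {G Q : Type*} [Group G] [Group Q] (φ : G →* Q) {α : G → G} {β : Q → Q}
    (h : ∀ a, φ (α a) = β (φ a)) {g : G} {n : ℕ} (hn : (fun a => a⁻¹ * α a)^[n] g = 1) :
    (fun a => a⁻¹ * β a)^[n] (φ g) = 1 := by
  have hs : Function.Semiconj φ (fun a => a⁻¹ * α a) (fun a => a⁻¹ * β a) := by
    intro a
    simp [h]
  rw [← (hs.iterate_right n).eq, hn, map_one]

lemma NilAut.conj {G : Type*} [Group G] {α : MulAut G} (h : NilAut α) (σ : MulAut G) :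
    NilAut (σ * α * σ⁻¹ : MulAut G) := by
  intro g
  obtain ⟨n, hn⟩ := h (σ⁻¹ g)
  refine ⟨n, ?_⟩
  have := nil_map (σ : MulAut G).toMonoidHom (β := (σ * α * σ⁻¹ : MulAut G)) (by simp) hn
  simpa using this

/-! ### Baer's theorem for one prime -/

section Baer

variable {Γ : Type*} [Group Γ] {q : ℕ}

/-- A set of conjugates of `x` that generates a `q`-group. -/
def QSet (q : ℕ) (x : Γ) (F : Set Γ) : Prop :=
  F ⊆ conjugatesOf x ∧ IsPGroup q (Subgroup.closure F)

lemma conj_mem_conjugatesOf {x z : Γ} (hz : z ∈ conjugatesOf x) (g : Γ) :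
    g * z * g⁻¹ ∈ conjugatesOf x :=
  IsConj.trans hz (isConj_iff.2 ⟨g, rfl⟩)

lemma QSet.insert {x w : Γ} {k : ℕ} {F : Set Γ} (hF : QSet q x F)
    (hx : x ^ q ^ k = 1) (hw : w ∈ conjugatesOf x) (hwF : w ∈ Subgroup.normalizer F) :
    QSet q x (insert w F) := by
  refine ⟨Set.insert_subset hw hF.1, ?_⟩
  have hz : IsPGroup q (Subgroup.zpowers w) := by
    rintro ⟨_, m, rfl⟩
    refine ⟨k, Subtype.ext ?_⟩
    obtain ⟨c, rfl⟩ := isConj_iff.1 hw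
    have : (c * x * c⁻¹) ^ q ^ k = 1 := by rw [conj_pow, hx]; simp
    simp only [Subgroup.coe_pow, Subgroup.coe_one]
    rw [← zpow_natCast, zpow_comm, zpow_natCast, this, one_zpow]
  have := hz.to_sup_of_normal_right' hF.2 (by
    rw [Subgroup.zpowers_le]
    exact Subgroup.normalizer_le_normalizer_closure _ hwF)
  rwa [Set.insert_eq, Subgroup.closure_union, ← Subgroup.zpowers_eq_closure]

lemma QSet.conj {x : Γ} {F : Set Γ} (hF : QSet q x F) (g : Γ) :
    QSet q x (MulAut.conj g '' F) := by
  refine ⟨?_, ?_⟩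
  · rintro _ ⟨z, hz, rfl⟩
    exact conj_mem_conjugatesOf (hF.1 hz) g
  · have := hF.2.map (MulAut.conj g).toMonoidHom
    rwa [MonoidHom.map_closure] at this

lemma maximal_conj {x : Γ} {F : Set Γ} (hF : Maximal (QSet q x) F) (g : Γ) :
    Maximal (QSet q x) (MulAut.conj g '' F) := by
  refine ⟨hF.1.conj g, fun B hB hle => ?_⟩
  have h1 : F ⊆ MulAut.conj g⁻¹ '' B := by
    intro z hz
    exact ⟨_, hle ⟨z, hz, rfl⟩, by simp [mul_assoc]⟩
  have h2 := hF.2 (hB.conj g⁻¹) h1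
  intro b hb
  exact ⟨_, h2 ⟨b, hb, rfl⟩, by simp [mul_assoc]⟩

lemma closed_of_maximal {x z : Γ} {F : Set Γ} (hF : Maximal (QSet q x) F)
    (hz : z ∈ conjugatesOf x) (hzF : z ∈ Subgroup.closure F) : z ∈ F := by
  have : QSet q x (insert z F) := by
    refine ⟨Set.insert_subset hz hF.1.1, hF.1.2.to_le ?_⟩
    rw [Subgroup.closure_le]
    exact Set.insert_subset hzF Subgroup.subset_closure
  exact hF.2 this (Set.subset_insert _ _) (Set.mem_insert _ _)

lemma closure_le_normalizer_of_maximal {x : Γ} {F : Set Γ} (hF : Maximal (QSet q x) F) :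
    Subgroup.closure F ≤ Subgroup.normalizer F := by
  intro z hz
  rw [Subgroup.mem_set_normalizer_iff]
  intro h
  constructor
  · intro hh
    exact closed_of_maximal hF (conj_mem_conjugatesOf (hF.1.1 hh) _)
      (mul_mem (mul_mem hz (Subgroup.subset_closure hh)) (inv_mem hz))
  · intro hh
    have h1 := conj_mem_conjugatesOf (hF.1.1 hh) z⁻¹
    have h2 := mul_mem (mul_mem (inv_mem hz) (Subgroup.subset_closure hh)) hz
    simp only [inv_inv, mul_assoc, inv_mul_cancel_left, inv_mul_cancel, mul_one] at h1 h2
    exact closed_of_maximal hF h1 h2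

/-- The normaliser condition in the `q`-group generated by `F`, sharpened so that the
normalising element can be taken in `F` itself. -/
lemma exists_normalizing [Finite Γ] (hq : q.Prime) {x : Γ} {F E : Set Γ}
    (hF : Maximal (QSet q x) F) (hEF : E ⊆ F) (hne : ∃ w ∈ F, w ∉ E)
    (hE : ∀ w ∈ F, w ∈ Subgroup.closure E → w ∈ E) :
    ∃ z ∈ F, z ∉ E ∧ z ∈ Subgroup.normalizer E := by
  have := Fact.mk hq
  obtain ⟨U, -, hU⟩ := Finite.exists_le_maximal
    (p := fun U : Subgroup Γ => U ≤ Subgroup.closure F ∧ E ⊆ U ∧ ∀ w ∈ F, w ∈ U → w ∈ E)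
    (a := Subgroup.closure E) ⟨Subgroup.closure_mono hEF, Subgroup.subset_closure, hE⟩
  obtain ⟨⟨hU1, hU2, hU3⟩, hmax⟩ := hU
  have : Group.IsNilpotent (Subgroup.closure F) := hF.1.2.isNilpotent
  have hnc := Group.normalizerCondition_of_isNilpotent (G := Subgroup.closure F)
    (U.subgroupOf (Subgroup.closure F)) (by
      rw [lt_top_iff_ne_top, Ne, Subgroup.subgroupOf_eq_top]
      intro h
      obtain ⟨w, hw, hwE⟩ := hne
      exact hwE (hU3 w hw (h (Subgroup.subset_closure hw))))
  -- `V` is the normaliser of `U` inside the group generated by `F`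
  set V := (Subgroup.normalizer (U : Set Γ)) ⊓ Subgroup.closure F with hV
  obtain ⟨t, ht1, ht2⟩ := SetLike.exists_of_lt hnc
  have htV : (t : Γ) ∈ V := by
    refine ⟨?_, t.2⟩
    change (t : Γ) ∈ Subgroup.normalizer (U : Set Γ)
    rw [Subgroup.mem_normalizer_iff] at ht1 ⊢
    intro h
    constructor
    · intro hh
      exact (ht1 ⟨h, hU1 hh⟩).1 hh
    · intro hh
      have h3 : h ∈ Subgroup.closure F := by
        have := mul_mem (mul_mem (inv_mem t.2) (hU1 hh)) t.2
        simpa [mul_assoc] using this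
      exact (ht1 ⟨h, h3⟩).2 hh
  have hUV : U ≤ V := le_inf Subgroup.le_normalizer hU1
  have : ¬ (V ≤ Subgroup.closure F ∧ E ⊆ V ∧ ∀ w ∈ F, w ∈ V → w ∈ E) := fun h =>
    ht2 (hmax h hUV htV)
  have : ∃ w ∈ F, w ∈ V ∧ w ∉ E := by
    by_contra hcon
    push Not at hcon
    exact this ⟨inf_le_right, hU2.trans hUV, hcon⟩
  obtain ⟨w, hwF, hwV, hwE⟩ := this
  refine ⟨w, hwF, hwE, ?_⟩
  have hwn := closure_le_normalizer_of_maximal hF (Subgroup.subset_closure hwF)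
  have key : ∀ e, e ∈ E ↔ e ∈ F ∧ e ∈ U := fun e =>
    ⟨fun h => ⟨hEF h, hU2 h⟩, fun h => hU3 e h.1 h.2⟩
  rw [Subgroup.mem_set_normalizer_iff]
  intro h
  rw [key, key, (Subgroup.mem_set_normalizer_iff.1 hwn) h, (Subgroup.mem_normalizer_iff.1 hwV.1) h]

/-- Baer's theorem for one prime: in a finite group, a left Engel element of `q`-power order
lies in a normal `q`-subgroup. The proof compares maximal sets of conjugates of `x` that
generate `q`-groups; if two of them are distinct and meet in a largest possible set `E`, then
the Engel condition forces the normaliser of `E` to preserve `F ∩ N(E)`, and so merges them. -/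
theorem isPGroup_normalClosure [Finite Γ] (hq : q.Prime) {x : Γ} {k : ℕ} (hx : x ^ q ^ k = 1)
    (hnil : NilAut (MulAut.conj x)) : IsPGroup q (Subgroup.normalClosure {x}) := by
  have := Fact.mk hq
  suffices h : QSet q x (conjugatesOf x) by
    have := h.2
    rwa [Subgroup.normalClosure, Group.conjugatesOfSet, Set.biUnion_singleton]
  by_contra hcon
  have hsing : ∀ z ∈ conjugatesOf x, QSet q x {z} := by
    intro z hz
    have h0 : QSet q x (∅ : Set Γ) := ⟨Set.empty_subset _, by
      rw [Subgroup.closure_empty]; exact IsPGroup.of_bot⟩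
    have := h0.insert hx hz (by simp [Subgroup.normalizer_empty])
    simpa using this
  obtain ⟨F₀, hxF₀, hF₀⟩ := Finite.exists_le_maximal (hsing x (mem_conjugatesOf_self))
  have : ∃ z ∈ conjugatesOf x, z ∉ F₀ := by
    by_contra hc
    push Not at hc
    exact hcon ((Set.Subset.antisymm hF₀.1.1 hc) ▸ hF₀.1)
  obtain ⟨z₀, hz₀, hz₀F⟩ := this
  obtain ⟨F₁, hzF₁, hF₁⟩ := Finite.exists_le_maximal (hsing z₀ hz₀)
  have hne01 : F₀ ≠ F₁ := fun h => hz₀F (h ▸ hzF₁ rfl)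
  obtain ⟨⟨F, F'⟩, ⟨hF, hF', hFF'⟩, hbest⟩ := Set.exists_max_image
    {p : Set Γ × Set Γ | Maximal (QSet q x) p.1 ∧ Maximal (QSet q x) p.2 ∧ p.1 ≠ p.2}
    (fun p => (p.1 ∩ p.2).ncard) (Set.toFinite _) ⟨(F₀, F₁), hF₀, hF₁, hne01⟩
  simp only at hF hF' hFF' hbest
  set E := F ∩ F' with hE
  -- by the choice of the pair, maximal sets sharing more than `E` coincide
  have huniq : ∀ A B w, Maximal (QSet q x) A → Maximal (QSet q x) B → E ⊆ A → E ⊆ B →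
      w ∈ A → w ∈ B → w ∉ E → A = B := by
    intro A B w hA hB hEA hEB hwA hwB hwE
    by_contra hne
    have h1 := hbest (A, B) ⟨hA, hB, hne⟩
    have h2 : (insert w E).ncard ≤ (A ∩ B).ncard :=
      Set.ncard_le_ncard (Set.insert_subset ⟨hwA, hwB⟩ (Set.subset_inter hEA hEB)) (Set.toFinite _)
    rw [Set.ncard_insert_of_notMem hwE (Set.toFinite _)] at h2
    simp only at h1
    omega
  have huniq' : ∀ D A w, QSet q x D → Maximal (QSet q x) A → E ⊆ D → E ⊆ A → w ∈ D → w ∈ A →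
      w ∉ E → D ⊆ A := by
    intro D A w hD hA hED hEA hwD hwA hwE
    obtain ⟨B, hDB, hB⟩ := Finite.exists_le_maximal hD
    have := huniq A B w hA hB hEA (hED.trans hDB) hwA (hDB hwD) hwE
    exact this ▸ hDB
  have hEF : E ⊆ F := Set.inter_subset_left
  have hEF' : E ⊆ F' := Set.inter_subset_right
  have hEcl : ∀ w ∈ conjugatesOf x, w ∈ Subgroup.closure E → w ∈ E := fun w hw hwE =>
    ⟨closed_of_maximal hF hw (Subgroup.closure_mono hEF hwE),
      closed_of_maximal hF' hw (Subgroup.closure_mono hEF' hwE)⟩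
  obtain ⟨z, hzF, hzE, hzN⟩ := exists_normalizing hq hF hEF (by
    by_contra hc
    push Not at hc
    exact hFF' (Set.Subset.antisymm (fun w hw => hEF' (hc w hw))
      (hF.2 hF'.1 fun w hw => hEF' (hc w hw)))) fun w hw => hEcl w (hF.1.1 hw)
  obtain ⟨z', hzF', hzE', hzN'⟩ := exists_normalizing hq hF' hEF' (by
    by_contra hc
    push Not at hc
    exact hFF' (Set.Subset.antisymm (hF'.2 hF.1 fun w hw => hEF (hc w hw))
      fun w hw => hEF (hc w hw))) fun w hw => hEcl w (hF'.1.1 hw)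
  set N := Subgroup.normalizer E with hN
  set S := F ∩ N with hS
  have hES : E ⊆ S := fun e he => ⟨hEF he, by
    rw [hN, SetLike.mem_coe, Subgroup.mem_set_normalizer_iff]
    intro h
    have h1 := Subgroup.mem_set_normalizer_iff.1
      (closure_le_normalizer_of_maximal hF (Subgroup.subset_closure (hEF he))) h
    have h2 := Subgroup.mem_set_normalizer_iff.1
      (closure_le_normalizer_of_maximal hF' (Subgroup.subset_closure (hEF' he))) h
    exact and_congr h1 h2⟩
  have hSq : QSet q x S :=
    ⟨fun w hw => hF.1.1 hw.1, hF.1.2.to_le (Subgroup.closure_mono Set.inter_subset_left)⟩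
  set K := N ⊓ Subgroup.normalizer S with hK
  have hNconj : ∀ g ∈ N, ∀ n, n ∈ N ↔ g * n * g⁻¹ ∈ N := by
    intro g hg n
    rw [Subgroup.mul_mem_cancel_right _ (inv_mem hg), Subgroup.mul_mem_cancel_left _ hg]
  have hnormS : ∀ g ∈ N, g ∈ Subgroup.normalizer F → g ∈ K := by
    intro g hg hgF
    refine ⟨hg, ?_⟩
    change g ∈ Subgroup.normalizer S
    rw [Subgroup.mem_set_normalizer_iff]
    intro h
    exact and_congr (Subgroup.mem_set_normalizer_iff.1 hgF h) (hNconj g hg h)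
  have hzK : z ∈ K := hnormS z hzN
    (closure_le_normalizer_of_maximal hF (Subgroup.subset_closure hzF))
  -- conjugates of `x` in `K` already lie in `F`
  have habs : ∀ w ∈ conjugatesOf x, w ∈ K → w ∈ F := by
    intro w hw hwK
    exact huniq' _ F z (hSq.insert hx hw hwK.2) hF (hES.trans (Set.subset_insert _ _)) hEF
      (Set.mem_insert_of_mem _ ⟨hzF, hzN⟩) hzF hzE (Set.mem_insert _ _)
  have hNK : N ≤ K := by
    by_contra hc
    obtain ⟨g, hgN, hgK⟩ := SetLike.not_le_iff_exists.1 hc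
    have hznil : NilAut (MulAut.conj z) := by
      obtain ⟨c, rfl⟩ := isConj_iff.1 (hF.1.1 hzF)
      have := hnil.conj (MulAut.conj c)
      rwa [← map_inv, ← map_mul, ← map_mul] at this
    obtain ⟨n, hn⟩ := hznil g
    obtain ⟨m, hm1, hm2⟩ := exists_last_step (fun a => a⁻¹ * MulAut.conj z a)
      (fun a => a ∈ K) g hgK n (by rw [hn]; exact one_mem K)
    have hiterN : ∀ m, (fun a => a⁻¹ * MulAut.conj z a)^[m] g ∈ N := by
      intro m
      induction m with
      | zero => exact hgN
      | succ m ih =>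
        rw [Function.iterate_succ_apply']
        exact mul_mem (inv_mem ih) (mul_mem (mul_mem hzN ih) (inv_mem hzN))
    have hrN := hiterN m
    set r := (fun a => a⁻¹ * MulAut.conj z a)^[m] g with hr
    have hwK : r⁻¹ * z * r ∈ K := by
      have := mul_mem hm2 hzK
      simpa [mul_assoc] using this
    have hwΩ : r⁻¹ * z * r ∈ conjugatesOf x := by
      simpa using conj_mem_conjugatesOf (hF.1.1 hzF) r⁻¹
    have hwF := habs _ hwΩ hwK
    have hwE : r⁻¹ * z * r ∉ E := by
      rw [← (Subgroup.mem_set_normalizer_iff''.1 hrN)]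
      exact hzE
    have heq : F = MulAut.conj r⁻¹ '' F := by
      refine huniq _ _ _ hF (maximal_conj hF r⁻¹) hEF ?_ hwF ⟨z, hzF, by simp⟩ hwE
      intro e he
      exact ⟨r * e * r⁻¹, hEF ((Subgroup.mem_set_normalizer_iff.1 hrN e).1 he), by simp [mul_assoc]⟩
    apply hm1
    refine hnormS r hrN ?_
    rw [← Subgroup.inv_mem_iff, Subgroup.mem_normalizer_iff_conj_image_eq]
    exact heq.symm
  exact hzE' ⟨habs z' (hF'.1.1 hzF') (hNK hzN'), hzF'⟩

end Baer

/-! ### Nil-automorphisms of finite groups -/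

section FiniteAction

open scoped commutatorElement

variable {Q : Type*} [Group Q] {q : ℕ}

/-- The group `O_q(Q)` generated by the normal `q`-subgroups of `Q`; for finite `Q` it is the
largest normal `q`-subgroup. -/
def qCore (q : ℕ) (Q : Type*) [Group Q] : Subgroup Q :=
  sSup {N : Subgroup Q | N.Normal ∧ IsPGroup q N}

lemma qCore_isPGroup [Finite Q] (hq : q.Prime) : IsPGroup q (qCore q Q) := by
  have := Fact.mk hq
  exact Sylow.sSup_of_normal _ (fun _ h => h.2) (fun _ h => h.1)

lemma qCore_apply_mem (σ : MulAut Q) {g : Q} (hg : g ∈ qCore q Q) : σ g ∈ qCore q Q := by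
  have : (qCore q Q).map σ.toMonoidHom ≤ qCore q Q := by
    rw [qCore, sSup_eq_iSup, Subgroup.map_iSup]
    refine iSup_le fun N => ?_
    rw [Subgroup.map_iSup]
    refine iSup_le fun hN => ?_
    rw [← sSup_eq_iSup]
    exact le_sSup ⟨hN.1.map _ σ.surjective, hN.2.map _⟩
  exact this ⟨g, hg, rfl⟩

/-- The automorphisms of `Q` that act trivially on `Q / O_q(Q)`. -/
def coreTrivial (q : ℕ) (Q : Type*) [Group Q] : Subgroup (MulAut Q) where
  carrier := {σ | ∀ g, g⁻¹ * σ g ∈ qCore q Q}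
  one_mem' := by simp
  mul_mem' {a b} ha hb g := by
    have := mul_mem (hb g) (ha (b g))
    simpa [mul_assoc] using this
  inv_mem' {a} ha g := by
    have := qCore_apply_mem a⁻¹ (inv_mem (ha g))
    simpa using this

instance : (coreTrivial q Q).Normal where
  conj_mem σ hσ τ g := by
    have := qCore_apply_mem τ (hσ (τ⁻¹ g))
    simpa using this

/-- A nil-automorphism of `q`-power order of a finite group `Q` acts trivially on `Q / O_q(Q)`:
it is a left Engel element of the semidirect product of `Q` by the cyclic group it generates. -/
lemma mem_coreTrivial [Finite Q] (hq : q.Prime) {α : MulAut Q} {k : ℕ} (hα : α ^ q ^ k = 1)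
    (hnil : NilAut α) : α ∈ coreTrivial q Q := by
  let φ : Subgroup.zpowers α →* MulAut Q := (Subgroup.zpowers α).subtype
  have : Finite (Q ⋊[φ] Subgroup.zpowers α) :=
    Finite.of_equiv _ SemidirectProduct.equivProd.symm
  let c : Subgroup.zpowers α := ⟨α, Subgroup.mem_zpowers α⟩
  let x : Q ⋊[φ] Subgroup.zpowers α := SemidirectProduct.inr c
  have hconj : ∀ g : Q, (SemidirectProduct.inl (α g) : Q ⋊[φ] Subgroup.zpowers α) =
      MulAut.conj x (SemidirectProduct.inl g) := fun g => by
    rw [MulAut.conj_apply, ← map_inv]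
    exact SemidirectProduct.inl_aut c g
  have hx : x ^ q ^ k = 1 := by
    rw [← map_pow, show c ^ q ^ k = 1 from Subtype.ext hα, map_one]
  have hxnil : NilAut (MulAut.conj x) := by
    intro a
    obtain ⟨n, hn⟩ := hnil a.left
    have h1 := nil_map (SemidirectProduct.inl : Q →* Q ⋊[φ] Subgroup.zpowers α) hconj hn
    have h2 : (fun a => a⁻¹ * MulAut.conj x a)^[n + 1] (SemidirectProduct.inl a.left) = 1 := by
      rw [Function.iterate_succ_apply', h1]
      simp
    set r : Q ⋊[φ] Subgroup.zpowers α := SemidirectProduct.inr a.right with hr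
    have hcomm : r * x = x * r := by
      obtain ⟨m, hm⟩ := a.right.2
      have : a.right * c = c * a.right := by
        apply Subtype.ext
        rw [Subgroup.coe_mul, Subgroup.coe_mul, ← hm]
        exact (Commute.zpow_self α m).eq
      rw [hr, ← map_mul, ← map_mul, this]
    have hcomm' : Commute (MulAut.conj r⁻¹) (MulAut.conj x) := by
      have : Commute r x := hcomm
      exact this.inv_left.map MulAut.conj
    refine ⟨n + 1, ?_⟩
    rw [Function.iterate_succ_apply] at h2 ⊢
    have h3 := nil_map (MulAut.conj r⁻¹).toMonoidHom (β := MulAut.conj x)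
      (fun a => DFunLike.congr_fun hcomm'.eq a) h2
    rw [← h3]
    congr 1
    conv_lhs => rw [← SemidirectProduct.inl_left_mul_inr_right a, ← hr]
    have : x * r * x⁻¹ = r := by rw [← hcomm, mul_inv_cancel_right]
    simp only [mul_inv_rev, map_mul, MulAut.conj_apply x r, this]
    simp [mul_assoc]
  have hB := isPGroup_normalClosure hq hx hxnil
  have hB' := hB.comap_of_injective (SemidirectProduct.inl : Q →* Q ⋊[φ] Subgroup.zpowers α)
    SemidirectProduct.inl_injective
  have hle : (Subgroup.normalClosure {x}).comap
      (SemidirectProduct.inl : Q →* Q ⋊[φ] Subgroup.zpowers α) ≤ qCore q Q :=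
    le_sSup ⟨Subgroup.normal_comap _, hB'⟩
  intro g
  apply hle
  rw [Subgroup.mem_comap, map_mul, hconj, MulAut.conj_apply, map_inv, ← mul_assoc, ← mul_assoc]
  have hxm : x ∈ Subgroup.normalClosure {x} := Subgroup.subset_normalClosure rfl
  refine mul_mem ?_ (inv_mem hxm)
  simpa using Subgroup.normalClosure_normal.conj_mem x hxm (SemidirectProduct.inl g)⁻¹

lemma coreTrivial_disjoint [Finite Q] {p : ℕ} (hp : p.Prime) (hq : q.Prime) (hpq : p ≠ q)
    {σ : MulAut Q} (h1 : σ ∈ coreTrivial p Q) (h2 : σ ∈ coreTrivial q Q) : σ = 1 := by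
  have := Fact.mk hp
  have := Fact.mk hq
  ext g
  have h := (Subgroup.disjoint_def.1 (IsPGroup.disjoint_of_ne p q hpq _ _
    (qCore_isPGroup (Q := Q) hp) (qCore_isPGroup hq))) (h1 g) (h2 g)
  rw [inv_mul_eq_one] at h
  exact h.symm

/-- If `L = [L, y]` acts on a finite group `Q` by nil-automorphisms, and `y` acts on `Q` as a
nil-automorphism of `q`-power order, then `L` acts trivially. The equality
`L = [L, y]` is expressed by `hyL` and `hgen`. Elements of prime order `r ≠ q` in
the image of `L` are trivial modulo both `O_r(Q)` and `O_q(Q)`, so the image of `⟨L, y⟩` is a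
`q`-group, and nilpotency of the latter kills `L = [L, y]`. -/
theorem action_trivial [Finite Q] {S : Type*} [Group S] (ρ : S →* MulAut Q) (hq : q.Prime)
    {k : ℕ} (L : Subgroup S) (y : S) (hyL : ∀ l ∈ L, y * l * y⁻¹ ∈ L)
    (hgen : ∀ K : Subgroup S, (∀ l ∈ L, l⁻¹ * (y * l * y⁻¹) ∈ K) → L ≤ K)
    (hL : ∀ l ∈ L, NilAut (ρ l)) (hy : NilAut (ρ y)) (hyq : ρ y ^ q ^ k = 1) :
    ∀ l ∈ L, ρ l = 1 := by
  have := Fact.mk hq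
  have hyT := mem_coreTrivial hq hyq hy
  have hLT : L ≤ (coreTrivial q Q).comap ρ := by
    apply hgen
    intro l _
    rw [← mul_assoc, ← mul_assoc]
    refine mul_mem ?_ (inv_mem (show y ∈ (coreTrivial q Q).comap ρ from hyT))
    simpa using (inferInstance : ((coreTrivial q Q).comap ρ).Normal).conj_mem y hyT l⁻¹
  have hA : IsPGroup q (L.map ρ) := by
    rw [IsPGroup.iff_card]
    refine ⟨_, Nat.eq_prime_pow_of_unique_prime_dvd Nat.card_pos.ne' ?_⟩
    intro r hr hrd
    have := Fact.mk hr
    obtain ⟨a, ha⟩ := exists_prime_orderOf_dvd_card' r hrd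
    obtain ⟨l, hl, hla⟩ := a.2
    rw [← Subgroup.orderOf_coe, ← hla] at ha
    by_contra hne
    have h1 : ρ l ∈ coreTrivial r Q :=
      mem_coreTrivial (k := 1) hr (by rw [pow_one, ← ha, pow_orderOf_eq_one]) (hL l hl)
    rw [coreTrivial_disjoint hr hq hne h1 (hLT hl), orderOf_one] at ha
    exact hr.one_lt.ne ha
  have hZ : IsPGroup q (Subgroup.zpowers (ρ y)) := by
    rintro ⟨_, m, rfl⟩
    refine ⟨k, Subtype.ext ?_⟩
    simp only [Subgroup.coe_pow, Subgroup.coe_one]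
    rw [← zpow_natCast, zpow_comm, zpow_natCast, hyq, one_zpow]
  have hnorm : Subgroup.zpowers (ρ y) ≤ Subgroup.normalizer (L.map ρ : Subgroup (MulAut Q)) := by
    rw [Subgroup.zpowers_le, Subgroup.mem_normalizer_iff_map_conj_eq]
    -- an injective self-map of the finite group `ρ(L)` is onto
    refine Subgroup.eq_of_le_of_card_ge ?_ ?_
    · rintro _ ⟨_, ⟨l, hl, rfl⟩, rfl⟩
      exact ⟨_, hyL l hl, by simp⟩
    · exact (Subgroup.card_map_of_injective (f := (MulAut.conj (ρ y)).toMonoidHom)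
        (MulAut.conj (ρ y)).injective).ge
  have hB := hA.to_sup_of_normal_left' hZ hnorm
  set B := L.map ρ ⊔ Subgroup.zpowers (ρ y) with hBdef
  have hBnil : Group.IsNilpotent B := hB.isNilpotent
  obtain ⟨n, hn⟩ := (Subgroup.isNilpotent_iff_lowerCentralSeries B).1 hBnil
  have hle : ∀ n, L ≤ (B.lowerCentralSeries n).comap ρ := by
    intro n
    induction n with
    | zero =>
      intro l hl
      exact (le_sup_left : L.map ρ ≤ B) ⟨l, hl, rfl⟩
    | succ n ih =>
      apply hgen
      intro l hl
      have : ⁅ρ l⁻¹, ρ y⁆ ∈ ⁅B.lowerCentralSeries n, B⁆ :=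
        Subgroup.commutator_mem_commutator (ih (inv_mem hl))
          ((le_sup_right : _ ≤ B) (Subgroup.mem_zpowers _))
      rw [Subgroup.lowerCentralSeries_succ, Subgroup.mem_comap]
      simpa [commutatorElement_def, mul_assoc] using this
  intro l hl
  have := hle n hl
  rw [hn] at this
  exact this

end FiniteAction

/-! ### Characteristic quotients of invariant subgroups -/

section Quotients

/-- The automorphism of `M ⧸ K` induced by an automorphism of `M`, for `K` characteristic. -/
def quotAut {M : Type*} [Group M] (K : Subgroup M) [hK : K.Characteristic] :
    MulAut M →* MulAut (M ⧸ K) where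
  toFun σ := QuotientGroup.congr K K σ (Subgroup.characteristic_iff_map_eq.1 hK σ)
  map_one' := by
    ext a
    obtain ⟨m, rfl⟩ := QuotientGroup.mk_surjective a
    rfl
  map_mul' σ τ := by
    ext a
    obtain ⟨m, rfl⟩ := QuotientGroup.mk_surjective a
    rfl

/-- The automorphisms of `G` that leave the subgroup `M` invariant. -/
def autStab {G : Type*} [Group G] (M : Subgroup G) : Subgroup (MulAut G) where
  carrier := {s | ∀ m, m ∈ M ↔ s m ∈ M}
  one_mem' := by simp
  mul_mem' {a b} ha hb m := by rw [hb, ha]; rfl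
  inv_mem' {a} ha m := by rw [ha (a⁻¹ m), MulAut.apply_inv_self]

/-- Restriction to `M` of the automorphisms of `G` leaving `M` invariant. -/
def autRestrict {G : Type*} [Group G] (M : Subgroup G) : autStab M →* MulAut M where
  toFun s :=
    { toFun := fun m => ⟨s.1 m, (s.2 m).1 m.2⟩
      invFun := fun m => ⟨s.1⁻¹ m, ((s⁻¹).2 m).1 m.2⟩
      left_inv := fun m => Subtype.ext (by simp)
      right_inv := fun m => Subtype.ext (by simp)
      map_mul' := fun a b => Subtype.ext (by simp) }
  map_one' := rfl
  map_mul' _ _ := rfl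

/-- The intersection of the kernels of all homomorphisms `M →* M ⧸ N`. -/
def charCore {M : Type*} [Group M] (N : Subgroup M) [N.Normal] : Subgroup M :=
  ⨅ φ : M →* M ⧸ N, φ.ker

variable {M : Type*} [Group M] (N : Subgroup M) [N.Normal]

lemma charCore_le : charCore N ≤ N :=
  (iInf_le _ (QuotientGroup.mk' N)).trans (QuotientGroup.ker_mk' N).le

instance : (charCore N).Characteristic := by
  rw [Subgroup.characteristic_iff_le_comap]
  intro σ m hm
  simp only [charCore, Subgroup.mem_comap, Subgroup.mem_iInf] at hm ⊢
  intro φ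
  exact hm (φ.comp σ.toMonoidHom)

/-- A finitely generated group has only finitely many homomorphisms into a given finite group. -/
lemma charCore_finiteIndex [Group.FG M] [N.FiniteIndex] : (charCore N).FiniteIndex := by
  obtain ⟨s, hs⟩ := Group.FG.out (G := M)
  have : Finite (M →* M ⧸ N) := by
    refine Finite.of_injective (fun φ (i : s) => φ i) fun φ ψ h => ?_
    refine MonoidHom.eq_of_eqOn_dense hs fun m hm => congr_fun h ⟨m, hm⟩
  unfold charCore
  exact Subgroup.finiteIndex_iInf fun φ => Subgroup.finiteIndex_ker φ

/-- If a group `L = [L, v]` of nil-automorphisms of `G` leaves `M` invariant, and `v` is a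
nil-automorphism of `q`-power order, then `L` acts trivially on every finite characteristic
quotient of `M`. -/
theorem trivial_mod {G : Type*} [Group G] {M : Subgroup G} {K : Subgroup M} [K.Characteristic]
    [K.FiniteIndex] {q k : ℕ} (hq : q.Prime) (L : Subgroup (MulAut G)) (v : MulAut G)
    (hvq : v ^ q ^ k = 1) (hvL : ∀ l ∈ L, v * l * v⁻¹ ∈ L)
    (hgen : ∀ K : Subgroup (MulAut G), (∀ l ∈ L, l⁻¹ * (v * l * v⁻¹) ∈ K) → L ≤ K)
    (hL : ∀ l ∈ L, NilAut l) (hv : NilAut v) (hLM : L ≤ autStab M) (hvM : v ∈ autStab M) :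
    ∀ l (hl : l ∈ L) (m : M), m⁻¹ * ⟨l m, (hLM hl m).1 m.2⟩ ∈ K := by
  let ρ : autStab M →* MulAut (M ⧸ K) := (quotAut K).comp (autRestrict M)
  have hnil : ∀ s : autStab M, NilAut (s : MulAut G) → NilAut (ρ s) := by
    intro s hs a
    obtain ⟨m, rfl⟩ := QuotientGroup.mk'_surjective K a
    obtain ⟨n, hn⟩ := hs m
    refine ⟨n, nil_map (QuotientGroup.mk' K) (α := autRestrict M s) (fun a => rfl) ?_⟩
    have hs : Function.Semiconj M.subtype (fun a => a⁻¹ * autRestrict M s a)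
      (fun a => a⁻¹ * s.1 a) := fun a => rfl
    exact Subtype.ext (((hs.iterate_right n).eq m).trans hn)
  have hact := action_trivial (k := k) ρ hq (L.subgroupOf (autStab M)) ⟨v, hvM⟩
    (fun l hl => hvL l hl)
    (fun J hJ l hl => by
      have := hgen (J.map (autStab M).subtype)
        (fun l hl => ⟨_, hJ ⟨l, hLM hl⟩ hl, rfl⟩) hl
      obtain ⟨j, hj, hjl⟩ := this
      rwa [← Subtype.ext hjl])
    (fun l hl => hnil l (hL l hl)) (hnil _ hv)
    (by
      rw [← map_pow, show (⟨v, hvM⟩ : autStab M) ^ q ^ k = 1 from Subtype.ext hvq, map_one])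
  intro l hl m
  have h1 := hact ⟨l, hLM hl⟩ hl
  have h2 : ρ ⟨l, hLM hl⟩ (QuotientGroup.mk m) = QuotientGroup.mk m := by rw [h1]; rfl
  exact QuotientGroup.eq.1 h2.symm

end Quotients

/-! ### Locally graded groups -/

/-- Let `L = [L, y]` be a finite group of nil-automorphisms of a locally graded group, with `y` a
nil-automorphism of `q`-power order. Then `L` is trivial. The equality
`L = [L, y]` is expressed by `hyL` and `hgen`.

If not, nilness of `y` gives `g` not fixed by `L` with `c = g⁻¹ * y g` fixed by `L`. The subgroup
`M` generated by the elements `a l = g⁻¹ * l g` is finitely generated and invariant under `L`,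
under the conjugate `L ^ g`, and under `v = y ^ g`, which acts on `L` in the same way as `y`. On a
nontrivial finite quotient of `M` both `L` and `L ^ g` act trivially, so the quotient is abelian
and `a` induces a `v`-equivariant homomorphism from `L` onto it; as `L = [L, v]`, the map
`m ↦ m⁻¹ * v m` is then onto, hence bijective, and it cannot be nil. -/
theorem eq_bot_of_driven {G : Type*} [Group G] (hG : LocallyGraded G) {q k : ℕ} (hq : q.Prime)
    (L : Subgroup (MulAut G)) [Finite L] (y : MulAut G)
    (hyq : y ^ q ^ k = 1) (hyL : ∀ l ∈ L, y * l * y⁻¹ ∈ L)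
    (hgen : ∀ K : Subgroup (MulAut G), (∀ l ∈ L, l⁻¹ * (y * l * y⁻¹) ∈ K) → L ≤ K)
    (hL : ∀ l ∈ L, NilAut l) (hy : NilAut y) : L = ⊥ := by
  by_contra hne
  have : ∃ g₀ : G, ¬ ∀ l ∈ L, l g₀ = g₀ := by
    by_contra hc
    push Not at hc
    exact hne (L.eq_bot_iff_forall.2 fun l hl => MulEquiv.ext fun g => hc g l hl)
  obtain ⟨g₀, hg₀⟩ := this
  obtain ⟨n, hn⟩ := hy g₀
  obtain ⟨m, hm1, hm2⟩ := exists_last_step (fun a => a⁻¹ * y a) (fun g => ∀ l ∈ L, l g = g) g₀ hg₀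
    n (by rw [hn]; simp)
  set g := (fun a => a⁻¹ * y a)^[m] g₀
  apply hm1
  set c := g⁻¹ * y g with hc
  let σ : MulAut G := MulAut.conj g⁻¹
  let v : MulAut G := σ * y * σ⁻¹
  let a : MulAut G → G := fun l => g⁻¹ * l g
  have hvv : v = MulAut.conj c * y := by
    ext x
    simp [v, σ, hc, mul_assoc]
  -- `v` and `y` induce the same automorphism of `L`, because `L` fixes `c`
  have hvl : ∀ l ∈ L, v * l * v⁻¹ = y * l * y⁻¹ := by
    intro l hl
    have h := hm2 _ (hyL l hl)
    rw [hvv, mul_inv_rev, ← mul_assoc, mul_assoc _ y l, mul_assoc _ (y * l)]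
    rw [mul_inv_eq_iff_eq_mul]
    ext x
    have h' : (y * l * y⁻¹) (c * x * c⁻¹) = c * (y * l * y⁻¹) x * c⁻¹ := by
      rw [map_mul, map_mul, map_inv, h]
    simpa using h'.symm
  have haL : ∀ l ∈ L, ∀ l' ∈ L, l' (a l) = (a l')⁻¹ * a (l' * l) := by
    intro l _ l' _
    simp [a, mul_assoc]
  have hva : ∀ l ∈ L, v (a l) = a (v * l * v⁻¹) := by
    intro l hl
    have h := hm2 _ (hyL l hl)
    rw [hvl l hl, hvv]
    have hyg : y g = g * c := by simp [hc]
    have h1 : (y * l * y⁻¹) (y g) = y (l g) := by simp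
    rw [hyg, map_mul, h] at h1
    simp only [a, MulAut.mul_apply, MulAut.conj_apply, map_mul, map_inv, ← h1, hyg]
    simp [mul_assoc]
  let M : Subgroup G := Subgroup.closure (a '' L)
  have haM : ∀ l ∈ L, a l ∈ M := fun l hl => Subgroup.subset_closure ⟨l, hl, rfl⟩
  have hMFG : M.FG := (Subgroup.fg_iff _).2 ⟨_, rfl, (Set.toFinite (L : Set (MulAut G))).image a⟩
  have hLM' : ∀ l ∈ L, ∀ m ∈ M, l m ∈ M := by
    intro l hl m hm
    have : M ≤ M.comap l.toMonoidHom := by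
      rw [Subgroup.closure_le]
      rintro _ ⟨l', hl', rfl⟩
      have := mul_mem (inv_mem (haM l hl)) (haM _ (mul_mem hl hl'))
      rw [← haL l' hl' l hl] at this
      exact this
    exact this hm
  have hLM : L ≤ autStab M := fun l hl m => ⟨hLM' l hl m, fun h => by
    have := hLM' _ (inv_mem hl) _ h
    simpa using this⟩
  have hvM' : ∀ m ∈ M, v m ∈ M := by
    intro m hm
    have : M ≤ M.comap v.toMonoidHom := by
      rw [Subgroup.closure_le]
      rintro _ ⟨l, hl, rfl⟩
      have := haM _ (hvl l hl ▸ hyL l hl)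
      rw [← hva l hl] at this
      exact this
    exact this hm
  have hvq : v ^ q ^ k = 1 := by simp [v, conj_pow, hyq]
  have hvM : v ∈ autStab M := by
    intro m
    refine ⟨hvM' m, fun h => ?_⟩
    have hit : ∀ j : ℕ, (v ^ j) (v m) ∈ M := by
      intro j
      induction j with
      | zero => exact h
      | succ j ih => rw [pow_succ']; exact hvM' _ ih
    have h1 := hit (q ^ k - 1)
    rw [← MulAut.mul_apply, ← pow_succ, Nat.sub_add_cancel (Nat.pow_pos hq.pos), hvq] at h1
    exact h1
  -- the conjugate `L ^ g`, again satisfying the hypotheses with respect to `v`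
  let L' : Subgroup (MulAut G) := L.map (MulAut.conj σ).toMonoidHom
  have hL'app : ∀ l : MulAut G, ∀ x, (MulAut.conj σ l) x = a l * l x * (a l)⁻¹ := by
    intro l x
    simp [σ, a, mul_assoc]
  have hL'M : L' ≤ autStab M := by
    rintro _ ⟨l, hl, rfl⟩ m
    change m ∈ M ↔ (MulAut.conj σ l) m ∈ M
    rw [hL'app, Subgroup.mul_mem_cancel_right _ (inv_mem (haM l hl)),
      Subgroup.mul_mem_cancel_left _ (haM l hl)]
    exact hLM hl m
  by_cases hMbot : M = ⊥
  · intro l hl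
    have : a l ∈ (⊥ : Subgroup G) := hMbot ▸ haM l hl
    rw [Subgroup.mem_bot, inv_mul_eq_one] at this
    exact this.symm
  exfalso
  obtain ⟨N, hN, hNtop, hNfin⟩ := hG M hMbot hMFG
  have : Group.FG M := (Group.fg_iff_subgroup_fg M).2 hMFG
  have := charCore_finiteIndex N
  have hKtop : charCore N ≠ ⊤ := fun h => hNtop (top_le_iff.1 (h ▸ charCore_le N))
  let K := charCore N
  have hgenv : ∀ K : Subgroup (MulAut G), (∀ l ∈ L, l⁻¹ * (v * l * v⁻¹) ∈ K) → L ≤ K :=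
    fun K hK => hgen K fun l hl => hvl l hl ▸ hK l hl
  have hvnil : NilAut v := hy.conj σ
  have hconj1 := trivial_mod (K := K) hq L v hvq (fun l hl => hvl l hl ▸ hyL l hl) hgenv hL hvnil
    hLM hvM
  have hconj2 := trivial_mod (K := K) hq L' v hvq
    (by
      rintro _ ⟨l, hl, rfl⟩
      exact ⟨_, hyL l hl, by simp [v, mul_assoc]⟩)
    (by
      intro J hJ
      rw [Subgroup.map_le_iff_le_comap]
      refine hgen _ fun l hl => ?_
      have := hJ _ ⟨l, hl, rfl⟩
      simpa [v, mul_assoc] using this)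
    (by
      rintro _ ⟨l, hl, rfl⟩
      exact (hL l hl).conj σ)
    hvnil hL'M hvM
  let π : M →* M ⧸ K := QuotientGroup.mk' K
  let b : L → M := fun l => ⟨a l, haM l l.2⟩
  have hfix : ∀ l (hl : l ∈ L) (m : M), π ⟨l m, hLM' l hl m m.2⟩ = π m := fun l hl m =>
    (QuotientGroup.eq.2 (hconj1 l hl m)).symm
  -- the images of the generators are central, because `L ^ g` and `L` both act trivially
  have hcent : ∀ (l : L) (m : M), π (b l) * π m = π m * π (b l) := by
    intro l m
    have h1 : π m = π ⟨(MulAut.conj σ l) m, _⟩ :=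
      QuotientGroup.eq.2 (hconj2 _ ⟨l, l.2, rfl⟩ m)
    have h2 : (⟨(MulAut.conj σ l) m, (hL'M ⟨l, l.2, rfl⟩ m).1 m.2⟩ : M) =
        b l * ⟨(l : MulAut G) m, hLM' l l.2 m m.2⟩ * (b l)⁻¹ := Subtype.ext (hL'app l m)
    rw [h2, map_mul, map_mul, hfix l l.2, map_inv, eq_mul_inv_iff_mul_eq] at h1
    exact h1.symm
  have hspan : ∀ D : Subgroup (M ⧸ K), (∀ l, π (b l) ∈ D) → ∀ x, x ∈ D := by
    intro D hD x
    obtain ⟨m, rfl⟩ := QuotientGroup.mk'_surjective K x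
    have : M ≤ (D.comap π).map M.subtype := by
      rw [Subgroup.closure_le]
      rintro _ ⟨l, hl, rfl⟩
      exact ⟨b ⟨l, hl⟩, hD _, rfl⟩
    obtain ⟨m', hm', hmm⟩ := this m.2
    rwa [← show m' = m from Subtype.ext hmm]
  have hcomm : ∀ x z : M ⧸ K, x * z = z * x := by
    have hZ := hspan (Subgroup.center (M ⧸ K)) (by
      intro l
      rw [Subgroup.mem_center_iff]
      intro x
      obtain ⟨m, rfl⟩ := QuotientGroup.mk'_surjective K x
      exact (hcent l m).symm)
    exact fun x z => ((Subgroup.mem_center_iff.1 (hZ x)) z).symm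
  let vM : MulAut M := autRestrict M ⟨v, hvM⟩
  let vQ : MulAut (M ⧸ K) := quotAut K vM
  have hvQπ : ∀ m, vQ (π m) = π (vM m) := fun m => rfl
  let ψ : M ⧸ K →* M ⧸ K :=
    { toFun := fun x => x⁻¹ * vQ x
      map_one' := by simp
      map_mul' := fun x z => by
        rw [map_mul, mul_inv_rev, hcomm z⁻¹ x⁻¹, mul_assoc, mul_assoc, ← mul_assoc z⁻¹,
          hcomm z⁻¹ (vQ x), mul_assoc] }
  have hbmul : ∀ l l' : L, π (b (l * l')) = π (b l) * π (b l') := by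
    intro l l'
    have h1 := hfix l l.2 (b l')
    have h2 : (⟨(l : MulAut G) (b l'), hLM' l l.2 _ (b l').2⟩ : M) = (b l)⁻¹ * b (l * l') :=
      Subtype.ext (haL l' l'.2 l l.2)
    rw [h2, map_mul, map_inv, inv_mul_eq_iff_eq_mul] at h1
    exact h1
  let β : L →* M ⧸ K := MonoidHom.mk' (fun l => π (b l)) hbmul
  have hsurj : Function.Surjective ψ := by
    have hle : L ≤ (ψ.range.comap β).map L.subtype := by
      refine hgenv _ fun l hl => ?_
      have hvlL : v * l * v⁻¹ ∈ L := hvl l hl ▸ hyL l hl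
      refine ⟨⟨l, hl⟩⁻¹ * ⟨v * l * v⁻¹, hvlL⟩, ?_, rfl⟩
      refine ⟨β ⟨l, hl⟩, ?_⟩
      rw [map_mul, map_inv]
      change (β ⟨l, hl⟩)⁻¹ * vQ (β ⟨l, hl⟩) = _
      congr 1
      change vQ (π (b ⟨l, hl⟩)) = π (b ⟨_, hvlL⟩)
      rw [hvQπ]
      congr 1
      exact Subtype.ext (hva l hl)
    refine hspan ψ.range fun l => ?_
    obtain ⟨l', hl', hll⟩ := hle l.2
    rw [← show l' = l from Subtype.ext hll]
    exact hl'
  have hinj : Function.Injective ψ := Finite.injective_iff_surjective.2 hsurj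
  apply hKtop
  rw [eq_top_iff]
  intro m _
  obtain ⟨n, hn⟩ := hvnil m
  have hs : Function.Semiconj M.subtype (fun x => x⁻¹ * vM x) (fun x => x⁻¹ * v x) := fun x => rfl
  have hn' : (fun x => x⁻¹ * vM x)^[n] m = 1 :=
    Subtype.ext (((hs.iterate_right n).eq m).trans hn)
  have hψ : ψ^[n] (π m) = 1 := nil_map π (β := vQ) (fun x => (hvQπ x).symm) hn'
  have h1 : π m = 1 := (hinj.iterate n) (by rw [hψ, iterate_map_one])
  exact (QuotientGroup.eq_one_iff m).1 h1

/-- If `G` is a locally graded group and `H` is a finite group of nil-automorphisms of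
`G`, then `H` is nilpotent. -/
theorem stmt_4 {G : Type*} [Group G] (hG : LocallyGraded G)
    (H : Subgroup (MulAut G)) (hfin : Finite H)
    (hnil : ∀ h ∈ H, ∀ g : G, ∃ n : ℕ, (fun a => a⁻¹ * h a)^[n] g = 1) :
    Group.IsNilpotent H := by
  -- it suffices that elements of prime power order are left Engel elements of `H`
  suffices hE : ∀ q : ℕ, q.Prime → ∀ k : ℕ, ∀ y : H, y ^ q ^ k = 1 → NilAut (MulAut.conj y) by
    refine (Group.isNilpotent_of_finite_tfae.out 0 3).2 ?_
    intro q hq P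
    refine ⟨fun y hy h => ?_⟩
    obtain ⟨k, hk⟩ := P.isPGroup' ⟨y, hy⟩
    have h1 : IsPGroup q (Subgroup.normalClosure {y}) :=
      isPGroup_normalClosure hq.out (congrArg Subtype.val hk)
        (hE q hq.out k y (congrArg Subtype.val hk))
    have hy1 : y ∈ Subgroup.normalClosure {y} :=
      Subgroup.subset_normalClosure (Set.mem_singleton y)
    exact h1.le_sylow_of_normal P (Subgroup.normalClosure_normal.conj_mem y hy1 h)
  intro q hq k y hyq h
  by_contra hcon
  push Not at hcon
  -- a minimal `y`-invariant subgroup meeting the sequence `[h, y, …, y]` satisfies `L = [L, y]`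
  let f : H → H := fun a => a⁻¹ * MulAut.conj y a
  obtain ⟨L, -, ⟨hLy, n, hLn⟩, hmin⟩ := Finite.exists_le_minimal
    (p := fun L : Subgroup H => (∀ l ∈ L, y * l * y⁻¹ ∈ L) ∧ ∃ n, f^[n] h ∈ L)
    (a := ⊤) ⟨fun _ _ => Subgroup.mem_top _, 0, Subgroup.mem_top _⟩
  have hle : Subgroup.closure (f '' L) ≤ L := by
    rw [Subgroup.closure_le]
    rintro _ ⟨l, hl, rfl⟩
    exact mul_mem (inv_mem hl) (hLy l hl)
  have hLcl : L ≤ Subgroup.closure (f '' L) := by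
    refine hmin ⟨?_, n + 1, ?_⟩ hle
    · intro l hl
      have : Subgroup.closure (f '' L) ≤
          (Subgroup.closure (f '' L)).comap (MulAut.conj y).toMonoidHom := by
        rw [Subgroup.closure_le]
        rintro _ ⟨l, hl, rfl⟩
        refine Subgroup.subset_closure ⟨y * l * y⁻¹, hLy l hl, ?_⟩
        simp [f, mul_assoc]
      exact this hl
    · rw [Function.iterate_succ_apply']
      exact Subgroup.subset_closure ⟨_, hLn, rfl⟩
  have : Finite (L.map H.subtype) :=
    Finite.of_equiv L (L.equivMapOfInjective _ H.subtype_injective).toEquiv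
  have hbot := eq_bot_of_driven hG hq (k := k) (L.map H.subtype) y
    (by rw [← Subgroup.coe_pow, hyq]; rfl)
    (by
      rintro _ ⟨l, hl, rfl⟩
      exact ⟨_, hLy l hl, rfl⟩)
    (by
      intro J hJ
      rw [Subgroup.map_le_iff_le_comap]
      refine hLcl.trans ?_
      rw [Subgroup.closure_le]
      rintro _ ⟨l, hl, rfl⟩
      exact hJ _ ⟨l, hl, rfl⟩)
    (by
      rintro _ ⟨l, _, rfl⟩
      exact hnil l l.2)
    (hnil y y.2)
  rw [Subgroup.map_eq_bot_iff_of_injective _ H.subtype_injective] at hbot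
  rw [hbot, Subgroup.mem_bot] at hLn
  exact hcon n hLn
end
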